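/- Let (S,T) be a Cuntz-type representation of F_θ^+ on H (m ≥ 2 or n ≥ 2). Suppose that for some k,l > 0 the row-isometry [S_uT_v : |u|=k, |v|=l] is of dilation type. Then for every p,q > 0 the row-isometry [S_uT_v : |u|=p, |v|=q] has no singular direct summand: there is no nonzero closed subspace M of H reducing every operator S_uT_v with |u|=p, |v|=q such that the unital WOT-closed algebra generated on M by the restrictions of these operators is self-adjoint. -/

import Mathlib

noncomputable section

open scoped InnerProductSpace ComplexInnerProductSpace Classical

section GeneralDefs

variable {E : Type*} [NormedAddCommGroup E] [InnerProductSpace ℂ E]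

/-- The operator associated to a word: `wordOp V [a₁, …, a_r] = V a₁ * ⋯ * V a_r`. -/
def wordOp {ι : Type*} (V : ι → E →L[ℂ] E) (w : List ι) : E →L[ℂ] E :=
  (w.map V).prod

/-- The operator associated to a word of fixed length `k` given as a function `Fin k → ι`. -/
def fnWordOp {ι : Type*} {k : ℕ} (V : ι → E →L[ℂ] E) (u : Fin k → ι) : E →L[ℂ] E :=
  wordOp V (List.ofFn u)

/-- The closure of a set of operators in the weak operator topology, described via
basic WOT-neighbourhoods (finitely many vector functionals). -/
def wotClosure (S : Set (E →L[ℂ] E)) : Set (E →L[ℂ] E) :=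
  {A | ∀ ε > (0 : ℝ), ∀ F : Finset (E × E), ∃ B ∈ S, ∀ p ∈ F, ‖⟪p.1, (A - B) p.2⟫‖ < ε}

/-- The unital WOT-closed algebra generated by a set of operators. -/
def genWotAlg (G : Set (E →L[ℂ] E)) : Set (E →L[ℂ] E) :=
  wotClosure ((Algebra.adjoin ℂ G : Subalgebra ℂ (E →L[ℂ] E)) : Set (E →L[ℂ] E))

/-- A wandering vector for a row-isometry `V = [V_a : a ∈ ι]`: a unit vector whose orbit
under all words in the `V_a` is an orthonormal family. -/
def IsWandering {ι : Type*} (V : ι → E →L[ℂ] E) (ζ : E) : Prop :=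
  ‖ζ‖ = 1 ∧ ∀ w w' : List ι,
    ⟪wordOp V w ζ, wordOp V w' ζ⟫ = if w = w' then 1 else 0

/-- Restriction of an operator to an invariant subspace (junk value `0` if not invariant). -/
def restrictCLM (A : E →L[ℂ] E) (M : Submodule ℂ E) : M →L[ℂ] M :=
  if h : ∀ x ∈ M, A x ∈ M then
    { toFun := fun x => ⟨A x, h x x.2⟩
      map_add' := by intro x y; ext; simp
      map_smul' := by intro c x; ext; simp
      cont := Continuous.subtype_mk (A.continuous.comp continuous_subtype_val) _ }
  else 0

/-- The unital WOT-closed algebra on `M` generated by the restrictions of the `V a` to `M`. -/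
def rowAlgOn {ι : Type*} (V : ι → E →L[ℂ] E) (M : Submodule ℂ E) : Set (M →L[ℂ] M) :=
  genWotAlg (Set.range fun a => restrictCLM (V a) M)

/-- The unital WOT-closed algebra on `M` generated by the restrictions of the `V a`
is self-adjoint. -/
def restrictedAlgSelfAdjoint {ι : Type*} (V : ι → E →L[ℂ] E) (M : Submodule ℂ E) : Prop :=
  ∀ A ∈ rowAlgOn V M, ∃ B ∈ rowAlgOn V M,
    ∀ x y : M, ⟪((A x : M) : E), (y : E)⟫ = ⟪(x : E), ((B y : M) : E)⟫

variable [CompleteSpace E]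

/-- A row-isometry is of dilation type if it is defect free and has no nonzero reducing
subspace on which it is either absolutely continuous (spanned by wandering vectors) or
singular (generating a self-adjoint WOT-closed algebra). -/
def IsDilationType {ι : Type*} [Fintype ι] (V : ι → E →L[ℂ] E) : Prop :=
  (∑ a, V a * star (V a)) = 1 ∧
    ¬ ∃ M : Submodule ℂ E, M ≠ ⊥ ∧ IsClosed (M : Set E) ∧
      (∀ a, ∀ x ∈ M, V a x ∈ M) ∧ (∀ a, ∀ x ∈ M, star (V a) x ∈ M) ∧
      ((M = (Submodule.span ℂ {ζ : E | ζ ∈ M ∧ IsWandering V ζ}).topologicalClosure) ∨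
        restrictedAlgSelfAdjoint V M)

end GeneralDefs

/-- An isometric representation of the single-vertex 2-graph `F_θ⁺` on a Hilbert space `H`. -/
structure TwoGraphRep (m n : ℕ) (θ : Equiv.Perm (Fin m × Fin n)) (H : Type*)
    [NormedAddCommGroup H] [InnerProductSpace ℂ H] [CompleteSpace H] where
  S : Fin m → H →L[ℂ] H
  T : Fin n → H →L[ℂ] H
  isometS : ∀ i i', star (S i) * S i' = if i = i' then 1 else 0
  isometT : ∀ j j', star (T j) * T j' = if j = j' then 1 else 0
  comm : ∀ i j, S i * T j = T (θ (i, j)).2 * S (θ (i, j)).1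

namespace TwoGraphRep

variable {m n : ℕ} {θ : Equiv.Perm (Fin m × Fin n)} {H : Type*}
  [NormedAddCommGroup H] [InnerProductSpace ℂ H] [CompleteSpace H]

/-- A representation is of Cuntz type if both row-isometries are defect free. -/
def CuntzType (ρ : TwoGraphRep m n θ H) : Prop :=
  (∑ i, ρ.S i * star (ρ.S i)) = 1 ∧ (∑ j, ρ.T j * star (ρ.T j)) = 1

/-- The nonself-adjoint 2-graph algebra `𝔖`: the unital WOT-closed algebra generated by
the `S_i` and `T_j`. -/
def alg (ρ : TwoGraphRep m n θ H) : Set (H →L[ℂ] H) :=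
  genWotAlg (Set.range ρ.S ∪ Set.range ρ.T)

/-- The von Neumann algebra generated by the `S_i` and `T_j`: the WOT-closure of the
unital *-algebra they generate. -/
def vnAlg (ρ : TwoGraphRep m n θ H) : Set (H →L[ℂ] H) :=
  genWotAlg ((Set.range ρ.S ∪ Set.range ρ.T) ∪ star '' (Set.range ρ.S ∪ Set.range ρ.T))

/-- Wandering vector for the row-isometry `[S_u T_v : |u| = k, |v| = l]`. -/
def IsWanderingKL (ρ : TwoGraphRep m n θ H) (k l : ℕ) (ζ : H) : Prop :=
  ‖ζ‖ = 1 ∧ ∀ (p p' : ℕ) (u u' : List (Fin m)) (v v' : List (Fin n)),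
    u.length = p * k → v.length = p * l → u'.length = p' * k → v'.length = p' * l →
    ⟪(wordOp ρ.S u * wordOp ρ.T v) ζ, (wordOp ρ.S u' * wordOp ρ.T v') ζ⟫ =
      if u = u' ∧ v = v' then 1 else 0

/-- The range of the structure projection `P_{k,l}`: the orthogonal complement of the
closed linear span of the wandering vectors of `[S_u T_v : |u| = k, |v| = l]`. -/
def structSpaceKL (ρ : TwoGraphRep m n θ H) (k l : ℕ) : Submodule ℂ H :=
  ((Submodule.span ℂ {ζ : H | ρ.IsWanderingKL k l ζ}).topologicalClosure)ᗮ

/-- The range of the first structure projection `P = ⋀_{k,l>0} P_{k,l}`. -/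
def firstStructSpace (ρ : TwoGraphRep m n θ H) : Submodule ℂ H :=
  ⨅ (k : ℕ) (l : ℕ) (_ : 0 < k) (_ : 0 < l), ρ.structSpaceKL k l

/-- The row-isometry `[S_u T_v : |u| = k, |v| = l]`. -/
def rowKL (ρ : TwoGraphRep m n θ H) (k l : ℕ) :
    ((Fin k → Fin m) × (Fin l → Fin n)) → H →L[ℂ] H :=
  fun p => fnWordOp ρ.S p.1 * fnWordOp ρ.T p.2

/-- A wandering vector for the representation `(S,T)`. -/
def IsWanderingRep (ρ : TwoGraphRep m n θ H) (ζ : H) : Prop :=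
  ‖ζ‖ = 1 ∧ ∀ (u u' : List (Fin m)) (v v' : List (Fin n)),
    ⟪(wordOp ρ.S u * wordOp ρ.T v) ζ, (wordOp ρ.S u' * wordOp ρ.T v') ζ⟫ =
      if u = u' ∧ v = v' then 1 else 0

/-- The representation is irreducible: the only closed subspaces invariant under all
`S_i, T_j, S_i*, T_j*` are `⊥` and `⊤`. -/
def Irreducible (ρ : TwoGraphRep m n θ H) : Prop :=
  ∀ M : Submodule ℂ H, IsClosed (M : Set H) →
    (∀ i, ∀ x ∈ M, ρ.S i x ∈ M) → (∀ i, ∀ x ∈ M, star (ρ.S i) x ∈ M) →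
    (∀ j, ∀ x ∈ M, ρ.T j x ∈ M) → (∀ j, ∀ x ∈ M, star (ρ.T j) x ∈ M) →
    M = ⊥ ∨ M = ⊤

/-- The representation is atomic with standard basis `ξ`: every generator maps each basis
vector to a unimodular multiple of a basis vector. -/
def AtomicBasis {Λ : Type*} (ρ : TwoGraphRep m n θ H) (ξ : HilbertBasis Λ ℂ H) : Prop :=
  (∀ i t, ∃ (c : ℂ) (t' : Λ), ‖c‖ = 1 ∧ ρ.S i (ξ t) = c • ξ t') ∧
  (∀ j t, ∃ (c : ℂ) (t' : Λ), ‖c‖ = 1 ∧ ρ.T j (ξ t) = c • ξ t')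

/-- `x` has a blue ring: `S_u x ∈ 𝕋x` for some nonempty word `u`. -/
def HasBlueRing (ρ : TwoGraphRep m n θ H) (x : H) : Prop :=
  ∃ u : List (Fin m), u ≠ [] ∧ ∃ c : ℂ, ‖c‖ = 1 ∧ wordOp ρ.S u x = c • x

/-- `x` has a red ring: `T_v x ∈ 𝕋x` for some nonempty word `v`. -/
def HasRedRing (ρ : TwoGraphRep m n θ H) (x : H) : Prop :=
  ∃ v : List (Fin n), v ≠ [] ∧ ∃ c : ℂ, ‖c‖ = 1 ∧ wordOp ρ.T v x = c • x

/-- `x` has a mixed ring: `T_v S_u x ∈ 𝕋x` for some nonempty words `u`, `v`. -/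
def HasMixedRing (ρ : TwoGraphRep m n θ H) (x : H) : Prop :=
  ∃ (u : List (Fin m)) (v : List (Fin n)), u ≠ [] ∧ v ≠ [] ∧
    ∃ c : ℂ, ‖c‖ = 1 ∧ wordOp ρ.T v (wordOp ρ.S u x) = c • x

end TwoGraphRep

open scoped ENNReal NNReal

section WordOps

variable {E ι : Type*} [NormedAddCommGroup E] [InnerProductSpace ℂ E]

@[simp] theorem wordOp_nil (V : ι → E →L[ℂ] E) : wordOp V [] = 1 := rfl

theorem wordOp_cons (V : ι → E →L[ℂ] E) (i : ι) (w : List ι) :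
    wordOp V (i :: w) = V i * wordOp V w := by
  simp [wordOp]

theorem wordOp_append (V : ι → E →L[ℂ] E) (w w' : List ι) :
    wordOp V (w ++ w') = wordOp V w * wordOp V w' := by
  simp [wordOp]

theorem wordOp_cons_apply (V : ι → E →L[ℂ] E) (i : ι) (w : List ι) (x : E) :
    wordOp V (i :: w) x = V i (wordOp V w x) := by
  simp [wordOp_cons]

theorem wordOp_append_apply (V : ι → E →L[ℂ] E) (w w' : List ι) (x : E) :
    wordOp V (w ++ w') x = wordOp V w (wordOp V w' x) := by
  simp [wordOp_append]

theorem wordOp_mem {V : ι → E →L[ℂ] E} {L : Submodule ℂ E} (hL : ∀ i, ∀ x ∈ L, V i x ∈ L)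
    (w : List ι) {x : E} (hx : x ∈ L) : wordOp V w x ∈ L := by
  induction w with
  | nil => simpa
  | cons i w ih => rw [wordOp_cons_apply]; exact hL i _ ih

/-- The `V i` are isometries with pairwise orthogonal ranges. -/
def IsRowIsometry (V : ι → E →L[ℂ] E) : Prop :=
  ∀ i j x y, ⟪V i x, V j y⟫ = if i = j then ⟪x, y⟫ else 0

namespace IsRowIsometry

variable {V : ι → E →L[ℂ] E} (hV : IsRowIsometry V)
include hV

theorem inner_map_map (i : ι) (x y : E) : ⟪V i x, V i y⟫ = ⟪x, y⟫ := by
  simpa using hV i i x y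

theorem inner_map_of_ne {i j : ι} (h : i ≠ j) (x y : E) : ⟪V i x, V j y⟫ = 0 := by
  simpa [h] using hV i j x y

theorem inner_wordOp (w : List ι) (x y : E) : ⟪wordOp V w x, wordOp V w y⟫ = ⟪x, y⟫ := by
  induction w with
  | nil => simp
  | cons i w ih => rw [wordOp_cons_apply, wordOp_cons_apply, hV.inner_map_map, ih]

theorem norm_wordOp (w : List ι) (x : E) : ‖wordOp V w x‖ = ‖x‖ := by
  rw [@norm_eq_sqrt_re_inner ℂ, hV.inner_wordOp, ← @norm_eq_sqrt_re_inner ℂ]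

theorem norm_map (i : ι) (x : E) : ‖V i x‖ = ‖x‖ := by
  rw [@norm_eq_sqrt_re_inner ℂ, hV.inner_map_map, ← @norm_eq_sqrt_re_inner ℂ]

theorem isWandering_of_forall_ne_nil {ζ : E} (h1 : ‖ζ‖ = 1)
    (h : ∀ w : List ι, w ≠ [] → ⟪wordOp V w ζ, ζ⟫ = 0) : IsWandering V ζ := by
  refine ⟨h1, fun w => ?_⟩
  induction w with
  | nil =>
    intro w'
    cases w' with
    | nil => simp [h1]
    | cons j w' =>
      rw [← inner_conj_symm]
      simp [h (j :: w') (by simp)]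
  | cons i w ih =>
    intro w'
    cases w' with
    | nil => simpa using h (i :: w) (by simp)
    | cons j w' =>
      rw [wordOp_cons_apply, wordOp_cons_apply, hV i j]
      by_cases hij : i = j
      · simp [hij, ih w']
      · simp [hij]

/-- A vector `x` with a functional separating it from its proper orbit yields a wandering vector
in the closed invariant subspace generated by `x`. -/
theorem exists_isWandering [CompleteSpace E] {x y : E}
    (h : ∀ w : List ι, w ≠ [] → ⟪wordOp V w x, y⟫ = 0) (hxy : ⟪x, y⟫ ≠ 0) :
    ∃ ζ, IsWandering V ζ := by
  set U : Submodule ℂ E :=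
    (Submodule.span ℂ {z | ∃ w : List ι, w ≠ [] ∧ z = wordOp V w x}).topologicalClosure with hU
  have hUc : IsClosed (U : Set E) := Submodule.isClosed_topologicalClosure _
  have : CompleteSpace U := hUc.completeSpace_coe
  have hle : Submodule.span ℂ {z | ∃ w : List ι, w ≠ [] ∧ z = wordOp V w x} ≤ U :=
    Submodule.le_topologicalClosure _
  have hyU : ∀ z ∈ U, ⟪z, y⟫ = 0 := by
    have : U ≤ (ℂ ∙ y)ᗮ := by
      refine Submodule.topologicalClosure_minimal _ (Submodule.span_le.2 ?_)
        (Submodule.isClosed_orthogonal _)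
      rintro z ⟨w, hw, rfl⟩
      rw [SetLike.mem_coe, Submodule.mem_orthogonal_singleton_iff_inner_left]
      exact h w hw
    intro z hz
    exact (Submodule.mem_orthogonal_singleton_iff_inner_left).1 (this hz)
  have hinv : ∀ w : List ι, ∀ z ∈ U, wordOp V w z ∈ U := by
    intro w
    have : U ≤ U.comap (wordOp V w).toLinearMap := by
      refine Submodule.topologicalClosure_minimal _ (Submodule.span_le.2 ?_)
        (hUc.preimage (wordOp V w).continuous)
      rintro z ⟨w', hw', rfl⟩
      refine hle (Submodule.subset_span ⟨w ++ w', by simp [hw'], ?_⟩)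
      simp [wordOp_append]
    exact fun z hz => this hz
  set ζ : E := x - U.starProjection x with hζ
  have hζU : ∀ z ∈ U, ⟪z, ζ⟫ = 0 := fun z hz =>
    (Submodule.mem_orthogonal U ζ).1 (Submodule.sub_starProjection_mem_orthogonal x) z hz
  have hζ0 : ζ ≠ 0 := by
    intro h0
    have : x = U.starProjection x := sub_eq_zero.1 h0
    exact hxy (hyU x (this ▸ Submodule.starProjection_apply_mem U x))
  have horb : ∀ w : List ι, w ≠ [] → wordOp V w ζ ∈ U := by
    intro w hw
    rw [hζ, map_sub]
    exact U.sub_mem (hle (Submodule.subset_span ⟨w, hw, rfl⟩))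
      (hinv w _ (Submodule.starProjection_apply_mem U x))
  have hn : ‖ζ‖ ≠ 0 := by simpa using hζ0
  refine ⟨((‖ζ‖⁻¹ : ℝ) : ℂ) • ζ, hV.isWandering_of_forall_ne_nil ?_ ?_⟩
  · rw [norm_smul]; simp [hn]
  · intro w hw
    rw [map_smul, inner_smul_left, inner_smul_right, hζU _ (horb w hw)]
    simp

end IsRowIsometry

/-- A row-isometry with defect zero. -/
structure IsCuntzRow [CompleteSpace E] [Fintype ι] (V : ι → E →L[ℂ] E) : Prop where
  iso : IsRowIsometry V
  sum_star : ∀ x, ∑ i, V i (star (V i) x) = x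

theorem inner_star_left [CompleteSpace E] (A : E →L[ℂ] E) (x y : E) :
    ⟪star A x, y⟫ = ⟪x, A y⟫ := by
  rw [ContinuousLinearMap.star_eq_adjoint, ContinuousLinearMap.adjoint_inner_left]

theorem inner_star_right [CompleteSpace E] (A : E →L[ℂ] E) (x y : E) :
    ⟪x, star A y⟫ = ⟪A x, y⟫ := by
  rw [ContinuousLinearMap.star_eq_adjoint, ContinuousLinearMap.adjoint_inner_right]

theorem IsRowIsometry.star_apply_self [CompleteSpace E] {V : ι → E →L[ℂ] E}
    (hV : IsRowIsometry V) (i : ι) (x : E) : star (V i) (V i x) = x := by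
  refine ext_inner_right ℂ fun y => ?_
  rw [inner_star_left, hV.inner_map_map]

theorem IsRowIsometry.star_apply_of_ne [CompleteSpace E] {V : ι → E →L[ℂ] E}
    (hV : IsRowIsometry V) {i j : ι} (h : i ≠ j) (x : E) : star (V i) (V j x) = 0 := by
  refine ext_inner_right ℂ fun y => ?_
  rw [inner_star_left, hV.inner_map_of_ne h.symm, inner_zero_left]

theorem star_wordOp_cons_apply [CompleteSpace E] (V : ι → E →L[ℂ] E) (i : ι) (w : List ι)
    (x : E) : star (wordOp V (i :: w)) x = star (wordOp V w) (star (V i) x) := by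
  simp [wordOp_cons]

theorem star_wordOp_mem [CompleteSpace E] {V : ι → E →L[ℂ] E} {L : Submodule ℂ E}
    (hL : ∀ i, ∀ x ∈ L, star (V i) x ∈ L) (w : List ι) {x : E} (hx : x ∈ L) :
    star (wordOp V w) x ∈ L := by
  induction w generalizing x with
  | nil => simpa
  | cons i w ih => rw [star_wordOp_cons_apply]; exact ih (hL i _ hx)

theorem IsCuntzRow.sum_inner_star [CompleteSpace E] [Fintype ι] {V : ι → E →L[ℂ] E}
    (hV : IsCuntzRow V) (x y : E) : ∑ i, ⟪star (V i) x, star (V i) y⟫ = ⟪x, y⟫ := by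
  conv_rhs => rw [← hV.sum_star y, inner_sum]
  simp [inner_star_left]

theorem IsCuntzRow.sum_enorm_star [CompleteSpace E] [Fintype ι] {V : ι → E →L[ℂ] E}
    (hV : IsCuntzRow V) (x : E) : ∑ i, ‖star (V i) x‖ₑ ^ 2 = ‖x‖ₑ ^ 2 := by
  have h : ∑ i, ‖star (V i) x‖ ^ 2 = ‖x‖ ^ 2 := by
    have := hV.sum_inner_star x x
    simp only [inner_self_eq_norm_sq_to_K] at this
    exact_mod_cast this
  simp only [← ofReal_norm, ← ENNReal.ofReal_pow (norm_nonneg _)]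
  rw [← ENNReal.ofReal_sum_of_nonneg fun i _ => by positivity, h]

end WordOps

section ListSums

variable {ι : Type*}

theorem tsum_list_eq [Fintype ι] (f : List ι → ℝ≥0∞) :
    ∑' w, f w = f [] + ∑ i, ∑' w, f (i :: w) := by
  let e : Unit ⊕ (ι × List ι) ≃ List ι :=
    { toFun := fun o => o.elim (fun _ => []) fun p => p.1 :: p.2
      invFun := fun w => match w with
        | [] => Sum.inl ()
        | i :: w => Sum.inr (i, w)
      left_inv := by rintro (_ | ⟨i, w⟩) <;> rfl
      right_inv := by rintro (_ | ⟨i, w⟩) <;> rfl }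
  rw [← e.tsum_eq, Summable.tsum_sum ENNReal.summable ENNReal.summable,
    ENNReal.summable.tsum_prod' fun _ => ENNReal.summable, tsum_fintype, tsum_fintype]
  simp [e]

/-- The square of the `ℓ²`-norm of a family of complex numbers. -/
def sqSum {α : Type*} (f : α → ℂ) : ℝ≥0∞ := ∑' a, ‖f a‖ₑ ^ 2

theorem enorm_add_sq_le {F : Type*} [SeminormedAddCommGroup F] (a b : F) :
    ‖a + b‖ₑ ^ 2 ≤ 2 * ‖a‖ₑ ^ 2 + 2 * ‖b‖ₑ ^ 2 := by
  have h : ‖a + b‖ ^ 2 ≤ 2 * ‖a‖ ^ 2 + 2 * ‖b‖ ^ 2 := by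
    have := norm_add_le a b
    nlinarith [norm_nonneg (a + b), sq_nonneg (‖a‖ - ‖b‖), norm_nonneg a, norm_nonneg b]
  simp only [← ofReal_norm, ← ENNReal.ofReal_pow (norm_nonneg _)]
  refine (ENNReal.ofReal_le_ofReal h).trans (le_of_eq ?_)
  rw [ENNReal.ofReal_add (by positivity) (by positivity), ENNReal.ofReal_mul (by norm_num),
    ENNReal.ofReal_mul (by norm_num)]
  simp

theorem sqSum_add_le {α : Type*} (f g : α → ℂ) :
    sqSum (fun a => f a + g a) ≤ 2 * sqSum f + 2 * sqSum g := by
  unfold sqSum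
  rw [← ENNReal.tsum_mul_left, ← ENNReal.tsum_mul_left, ← ENNReal.tsum_add]
  exact ENNReal.tsum_le_tsum fun a => enorm_add_sq_le _ _

theorem sqSum_const_mul {α : Type*} (c : ℂ) (f : α → ℂ) :
    sqSum (fun a => c * f a) = ‖c‖ₑ ^ 2 * sqSum f := by
  unfold sqSum
  rw [← ENNReal.tsum_mul_left]
  simp [mul_pow]

theorem sqSum_sum_le {α β : Type*} (s : Finset β) :
    ∃ K : ℝ≥0∞, K ≠ ⊤ ∧ ∀ f : β → α → ℂ,
      sqSum (fun a => ∑ b ∈ s, f b a) ≤ K * ∑ b ∈ s, sqSum (f b) := by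
  induction s using Finset.induction_on with
  | empty => exact ⟨0, by simp, fun f => by simp [sqSum]⟩
  | insert b s hb ih =>
    obtain ⟨K, hK, h⟩ := ih
    refine ⟨2 + 2 * K, by finiteness, fun f => ?_⟩
    simp only [Finset.sum_insert hb]
    refine (sqSum_add_le (f b) _).trans ?_
    calc 2 * sqSum (f b) + 2 * sqSum (fun a => ∑ b ∈ s, f b a)
        ≤ 2 * sqSum (f b) + 2 * (K * ∑ b ∈ s, sqSum (f b)) := by gcongr; exact h f
      _ ≤ (2 + 2 * K) * sqSum (f b) + (2 + 2 * K) * ∑ b ∈ s, sqSum (f b) := by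
        rw [← mul_assoc]
        gcongr
        · exact le_self_add
        · exact le_add_self
      _ = _ := by rw [mul_add]

theorem exists_tsum_length_le {f : List ι → ℝ≥0∞} (hf : ∑' w, f w ≠ ⊤) {ε : ℝ≥0∞}
    (hε : 0 < ε) : ∃ d : ℕ, ∑' w : List ι, (if d ≤ w.length then f w else 0) ≤ ε := by
  have h := ENNReal.tendsto_tsum_compl_atTop_zero hf
  obtain ⟨s, hs⟩ := (h.eventually (gt_mem_nhds hε)).exists
  refine ⟨s.sup List.length + 1, le_trans ?_ hs.le⟩
  rw [show ∑' b : {w // w ∉ s}, f b = _ from tsum_subtype {w | w ∉ s} f]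
  refine ENNReal.tsum_le_tsum fun w => ?_
  by_cases hw : w ∈ s
  · have : w.length ≤ s.sup List.length := Finset.le_sup hw
    rw [if_neg (by omega)]
    exact zero_le
  · rw [Set.indicator_of_mem (show w ∈ {w | w ∉ s} from hw)]
    split_ifs <;> simp

end ListSums

section OrbitSum

variable {E ι : Type*} [NormedAddCommGroup E] [InnerProductSpace ℂ E]

/-- The square of the `ℓ²`-norm of the coefficients of `y` along the orbit of `x`. -/
def orbitSum (V : ι → E →L[ℂ] E) (x y : E) : ℝ≥0∞ :=
  sqSum fun w => ⟪wordOp V w x, y⟫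

/-- The part of `orbitSum` supported on words of length at least `d`. -/
def orbitTail (V : ι → E →L[ℂ] E) (d : ℕ) (x y : E) : ℝ≥0∞ :=
  ∑' w : List ι, if d ≤ w.length then ‖⟪wordOp V w x, y⟫‖ₑ ^ 2 else 0

/-- `x` is absolutely continuous for `V`: its coefficient map `y ↦ (⟪V_w x, y⟫)_w` is a bounded
operator into `ℓ²`. -/
def IsAC (V : ι → E →L[ℂ] E) (x : E) : Prop :=
  ∃ C : ℝ≥0, ∀ y, orbitSum V x y ≤ C * ‖y‖ₑ ^ 2

variable {V : ι → E →L[ℂ] E}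

theorem orbitSum_zero_left (y : E) : orbitSum V 0 y = 0 := by
  simp [orbitSum, sqSum]

theorem orbitSum_zero_right (x : E) : orbitSum V x 0 = 0 := by
  simp [orbitSum, sqSum]

theorem orbitSum_add_left (x x' y : E) :
    orbitSum V (x + x') y ≤ 2 * orbitSum V x y + 2 * orbitSum V x' y := by
  simp only [orbitSum, map_add, inner_add_left]
  exact sqSum_add_le _ _

theorem orbitSum_add_right (x y y' : E) :
    orbitSum V x (y + y') ≤ 2 * orbitSum V x y + 2 * orbitSum V x y' := by
  simp only [orbitSum, inner_add_right]
  exact sqSum_add_le _ _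

theorem orbitSum_smul_left (c : ℂ) (x y : E) :
    orbitSum V (c • x) y = ‖c‖ₑ ^ 2 * orbitSum V x y := by
  simp only [orbitSum, map_smul, inner_smul_left]
  rw [sqSum_const_mul]
  congr 2
  simp [enorm_eq_nnnorm]

theorem orbitSum_smul_right (c : ℂ) (x y : E) :
    orbitSum V x (c • y) = ‖c‖ₑ ^ 2 * orbitSum V x y := by
  simp only [orbitSum, inner_smul_right]
  rw [sqSum_const_mul]

theorem enorm_inner_sq_le_orbitSum (x y : E) : ‖⟪x, y⟫‖ₑ ^ 2 ≤ orbitSum V x y := by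
  simpa [orbitSum, sqSum] using ENNReal.le_tsum (f := fun w => ‖⟪wordOp V w x, y⟫‖ₑ ^ 2) []

theorem orbitSum_wordOp_left (w : List ι) (x y : E) :
    orbitSum V (wordOp V w x) y ≤ orbitSum V x y := by
  unfold orbitSum sqSum
  have hinj : Function.Injective fun v : List ι => v ++ w := fun a b h => by simpa using h
  simpa [wordOp_append_apply] using
    ENNReal.tsum_comp_le_tsum_of_injective hinj fun v => ‖⟪wordOp V v x, y⟫‖ₑ ^ 2

theorem orbitTail_zero (x y : E) : orbitTail V 0 x y = orbitSum V x y := by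
  simp [orbitTail, orbitSum, sqSum]

theorem orbitSum_wordOp_left_le_tail (w : List ι) (x y : E) :
    orbitSum V (wordOp V w x) y ≤ orbitTail V w.length x y := by
  unfold orbitSum sqSum orbitTail
  have hinj : Function.Injective fun v : List ι => v ++ w := fun a b h => by simpa using h
  simpa [wordOp_append_apply] using
    ENNReal.tsum_comp_le_tsum_of_injective hinj fun v : List ι =>
      if w.length ≤ v.length then ‖⟪wordOp V v x, y⟫‖ₑ ^ 2 else 0

theorem exists_orbitTail_le {x y : E} (h : orbitSum V x y ≠ ⊤) {ε : ℝ≥0∞} (hε : 0 < ε) :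
    ∃ d, orbitTail V d x y ≤ ε :=
  exists_tsum_length_le h hε

theorem orbitTail_anti {d d' : ℕ} (h : d ≤ d') (x y : E) :
    orbitTail V d' x y ≤ orbitTail V d x y := by
  unfold orbitTail
  refine ENNReal.tsum_le_tsum fun w => ?_
  split_ifs with h1 h2
  · exact le_rfl
  · omega
  · exact zero_le
  · exact le_rfl

theorem orbitSum_eq [CompleteSpace E] [Fintype ι] (x y : E) :
    orbitSum V x y = ‖⟪x, y⟫‖ₑ ^ 2 + ∑ i, orbitSum V x (star (V i) y) := by
  simp only [orbitSum, sqSum]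
  rw [tsum_list_eq]
  simp [wordOp_cons_apply, inner_star_right]

theorem orbitTail_succ [CompleteSpace E] [Fintype ι] (d : ℕ) (x y : E) :
    orbitTail V (d + 1) x y = ∑ i, orbitTail V d x (star (V i) y) := by
  simp only [orbitTail]
  rw [tsum_list_eq]
  simp [wordOp_cons_apply, inner_star_right]

theorem IsRowIsometry.orbitSum_map_right [CompleteSpace E] [Fintype ι] (hV : IsRowIsometry V)
    (i : ι) (x y : E) : orbitSum V x (V i y) = ‖⟪x, V i y⟫‖ₑ ^ 2 + orbitSum V x y := by
  rw [orbitSum_eq, Finset.sum_eq_single i]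
  · rw [hV.star_apply_self]
  · intro j _ hj
    rw [hV.star_apply_of_ne hj, orbitSum_zero_right]
  · simp

namespace IsAC

theorem orbitSum_ne_top {x : E} (hx : IsAC V x) (y : E) : orbitSum V x y ≠ ⊤ := by
  obtain ⟨C, hC⟩ := hx
  exact ne_top_of_le_ne_top (by finiteness) (hC y)

theorem zero : IsAC V 0 := ⟨0, fun y => by simp [orbitSum_zero_left]⟩

theorem add {x x' : E} (hx : IsAC V x) (hx' : IsAC V x') : IsAC V (x + x') := by
  obtain ⟨C, hC⟩ := hx
  obtain ⟨C', hC'⟩ := hx'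
  refine ⟨2 * C + 2 * C', fun y => (orbitSum_add_left x x' y).trans ?_⟩
  push_cast
  rw [add_mul, mul_assoc, mul_assoc]
  gcongr
  · exact hC y
  · exact hC' y

theorem smul (c : ℂ) {x : E} (hx : IsAC V x) : IsAC V (c • x) := by
  obtain ⟨C, hC⟩ := hx
  refine ⟨‖c‖₊ ^ 2 * C, fun y => ?_⟩
  rw [orbitSum_smul_left]
  push_cast
  rw [mul_assoc, ← enorm_eq_nnnorm]
  gcongr
  exact hC y

theorem wordOp (w : List ι) {x : E} (hx : IsAC V x) : IsAC V (wordOp V w x) := by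
  obtain ⟨C, hC⟩ := hx
  exact ⟨C, fun y => (orbitSum_wordOp_left w x y).trans (hC y)⟩

theorem map (i : ι) {x : E} (hx : IsAC V x) : IsAC V (V i x) := by
  simpa [wordOp_cons] using hx.wordOp [i]

end IsAC

/-- The submodule of absolutely continuous vectors. -/
def acSubmodule (V : ι → E →L[ℂ] E) : Submodule ℂ E where
  carrier := {x | IsAC V x}
  zero_mem' := IsAC.zero
  add_mem' := IsAC.add
  smul_mem' c _ hx := IsAC.smul c hx

/-- Bessel's inequality for the orbit of a wandering vector. -/
theorem IsWandering.isAC {ζ : E} (h : IsWandering V ζ) : IsAC V ζ := by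
  have ho : Orthonormal ℂ fun w => _root_.wordOp V w ζ := orthonormal_iff_ite.2 h.2
  refine ⟨1, fun y => ?_⟩
  have h1 := ho.tsum_inner_products_le y
  have hs := ho.inner_products_summable y
  rw [orbitSum, sqSum]
  simp only [← ofReal_norm, ← ENNReal.ofReal_pow (norm_nonneg _)]
  rw [← ENNReal.ofReal_tsum_of_nonneg (fun _ => by positivity) hs]
  simpa using ENNReal.ofReal_le_ofReal h1

end OrbitSum

section Wold

variable {E ι : Type*} [NormedAddCommGroup E] [InnerProductSpace ℂ E]

theorem IsRowIsometry.isWandering_map {V : ι → E →L[ℂ] E} (hV : IsRowIsometry V) {ζ : E}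
    (h : IsWandering V ζ) (i : ι) : IsWandering V (V i ζ) := by
  refine ⟨by rw [hV.norm_map, h.1], fun w w' => ?_⟩
  have := h.2 (w ++ [i]) (w' ++ [i])
  simpa [wordOp_append_apply, wordOp_cons] using this

variable [CompleteSpace E]

/-- The largest reducing subspace for `V` inside an invariant subspace `L`. -/
def reducingCore (V : ι → E →L[ℂ] E) (L : Submodule ℂ E) : Submodule ℂ E where
  carrier := {y | ∀ w, star (wordOp V w) y ∈ L}
  zero_mem' w := by simp
  add_mem' h h' w := by rw [map_add]; exact L.add_mem (h w) (h' w)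
  smul_mem' c _ h w := by rw [map_smul]; exact L.smul_mem c (h w)

variable {V : ι → E →L[ℂ] E} {L : Submodule ℂ E}

theorem mem_reducingCore {y : E} : y ∈ reducingCore V L ↔ ∀ w, star (wordOp V w) y ∈ L := Iff.rfl

theorem reducingCore_le : reducingCore V L ≤ L := fun y hy => by simpa using hy []

theorem isClosed_reducingCore (hL : IsClosed (L : Set E)) :
    IsClosed (reducingCore V L : Set E) := by
  have : (reducingCore V L : Set E) = ⋂ w, ⇑(star (wordOp V w)) ⁻¹' (L : Set E) := by
    ext y; simp [mem_reducingCore]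
  rw [this]
  exact isClosed_iInter fun w => hL.preimage (star (wordOp V w)).continuous

theorem star_mem_reducingCore (i : ι) {y : E} (hy : y ∈ reducingCore V L) :
    star (V i) y ∈ reducingCore V L := fun w => by
  rw [← star_wordOp_cons_apply]; exact hy _

theorem map_mem_reducingCore (hV : IsRowIsometry V) (hL : ∀ i, ∀ x ∈ L, V i x ∈ L) (i : ι) {y : E}
    (hy : y ∈ reducingCore V L) : V i y ∈ reducingCore V L := fun w => by
  cases w with
  | nil => simpa using hL i _ (reducingCore_le hy)
  | cons j w =>
    rw [star_wordOp_cons_apply]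
    by_cases hij : j = i
    · subst hij
      rw [hV.star_apply_self]
      exact hy w
    · rw [hV.star_apply_of_ne hij, map_zero]
      exact L.zero_mem

variable [Fintype ι]

theorem IsCuntzRow.star_mem_of_orthogonal_wandering (hV : IsCuntzRow V) (hLc : IsClosed (L : Set E))
    (hL : ∀ i, ∀ x ∈ L, V i x ∈ L) {y : E} (hy : y ∈ L)
    (hort : ∀ ζ ∈ L, IsWandering V ζ → ⟪ζ, y⟫ = 0) (i : ι) : star (V i) y ∈ L := by
  set L₁ : Submodule ℂ E := ⨅ i, L.comap (star (V i)).toLinearMap with hL₁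
  have hmem : ∀ z, z ∈ L₁ ↔ ∀ i, star (V i) z ∈ L := fun z => by simp [hL₁]
  have hcl : IsClosed (L₁ : Set E) := by
    have : (L₁ : Set E) = ⋂ i, ⇑(star (V i)) ⁻¹' (L : Set E) := by
      ext y; simp [hmem]
    rw [this]
    exact isClosed_iInter fun i => hLc.preimage (star (V i)).continuous
  have : CompleteSpace L₁ := hcl.completeSpace_coe
  have hle : L₁ ≤ L := fun z hz => by
    rw [← hV.sum_star z]
    exact L.sum_mem fun i _ => hL i _ ((hmem z).1 hz i)
  have hword : ∀ w : List ι, w ≠ [] → ∀ z ∈ L, wordOp V w z ∈ L₁ := by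
    intro w hw z hz
    obtain ⟨j, w, rfl⟩ := List.exists_cons_of_ne_nil hw
    rw [hmem]
    intro i
    rw [wordOp_cons_apply]
    by_cases hij : i = j
    · subst hij
      rw [hV.iso.star_apply_self]
      exact wordOp_mem hL w hz
    · rw [hV.iso.star_apply_of_ne hij]
      exact L.zero_mem
  set d : E := y - L₁.starProjection y with hd
  have hdL : d ∈ L := L.sub_mem hy (hle (Submodule.starProjection_apply_mem L₁ y))
  have hdo : ∀ z ∈ L₁, ⟪z, d⟫ = 0 := fun z hz =>
    (Submodule.mem_orthogonal L₁ d).1 (Submodule.sub_starProjection_mem_orthogonal y) z hz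
  have hd0 : d = 0 := by
    by_contra hne
    have hn : ‖d‖ ≠ 0 := by simpa using hne
    have hwan : IsWandering V (((‖d‖⁻¹ : ℝ) : ℂ) • d) := by
      refine hV.iso.isWandering_of_forall_ne_nil ?_ ?_
      · rw [norm_smul]; simp [hn]
      · intro w hw
        rw [map_smul, inner_smul_left, inner_smul_right, hdo _ (hword w hw d hdL)]
        simp
    have h1 := hort _ (L.smul_mem _ hdL) hwan
    rw [inner_smul_left] at h1
    have h2 : ⟪d, y⟫ = 0 := by simpa [hne] using h1
    have h3 : ⟪d, d⟫ = 0 := by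
      have h4 : y = d + L₁.starProjection y := by simp [hd]
      rw [h4, inner_add_right, ← inner_conj_symm d (L₁.starProjection y),
        hdo _ (Submodule.starProjection_apply_mem L₁ y)] at h2
      simpa using h2
    exact hne (inner_self_eq_zero.1 h3)
  have : y ∈ L₁ := by
    rw [sub_eq_zero.1 hd0]
    exact Submodule.starProjection_apply_mem L₁ y
  exact (hmem y).1 this i

theorem IsCuntzRow.mem_reducingCore_of_orthogonal_wandering (hV : IsCuntzRow V)
    (hLc : IsClosed (L : Set E)) (hL : ∀ i, ∀ x ∈ L, V i x ∈ L) {y : E} (hy : y ∈ L)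
    (hort : ∀ ζ ∈ L, IsWandering V ζ → ⟪ζ, y⟫ = 0) : y ∈ reducingCore V L := by
  intro w
  induction w generalizing y with
  | nil => simpa
  | cons i w ih =>
    rw [star_wordOp_cons_apply]
    refine ih (hV.star_mem_of_orthogonal_wandering hLc hL hy hort i) fun ζ hζ hw => ?_
    rw [inner_star_right]
    exact hort _ (hL i _ hζ) (hV.iso.isWandering_map hw i)

/-- The Wold decomposition of the restriction to an invariant subspace. -/
theorem IsCuntzRow.eq_closure_span_wandering (hV : IsCuntzRow V)
    (hLc : IsClosed (L : Set E)) (hL : ∀ i, ∀ x ∈ L, V i x ∈ L) (hK : reducingCore V L = ⊥) :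
    L = (Submodule.span ℂ {ζ : E | ζ ∈ L ∧ IsWandering V ζ}).topologicalClosure := by
  set W := (Submodule.span ℂ {ζ : E | ζ ∈ L ∧ IsWandering V ζ}).topologicalClosure with hW
  have hWL : W ≤ L :=
    Submodule.topologicalClosure_minimal _ (Submodule.span_le.2 fun ζ hζ => hζ.1) hLc
  have : CompleteSpace W := (Submodule.isClosed_topologicalClosure _).completeSpace_coe
  refine le_antisymm (fun y hy => ?_) hWL
  have hz : y - W.starProjection y ∈ reducingCore V L := by
    refine hV.mem_reducingCore_of_orthogonal_wandering hLc hL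
      (L.sub_mem hy (hWL (Submodule.starProjection_apply_mem W y))) fun ζ hζ hw => ?_
    refine (Submodule.mem_orthogonal W _).1 (Submodule.sub_starProjection_mem_orthogonal y) ζ ?_
    exact Submodule.le_topologicalClosure _ (Submodule.subset_span ⟨hζ, hw⟩)
  rw [hK, Submodule.mem_bot, sub_eq_zero] at hz
  rw [hz]
  exact Submodule.starProjection_apply_mem W y

end Wold

section SelfAdjoint

variable {E ι : Type*} [NormedAddCommGroup E] [InnerProductSpace ℂ E]

/-- The unital WOT-closed algebra generated by `V` is self-adjoint. -/
def IsSelfAdjointRow (V : ι → E →L[ℂ] E) : Prop :=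
  ∀ A ∈ genWotAlg (Set.range V), ∃ B ∈ genWotAlg (Set.range V), ∀ x y, ⟪A x, y⟫ = ⟪x, B y⟫

theorem subset_wotClosure (S : Set (E →L[ℂ] E)) : S ⊆ wotClosure S := fun A hA ε hε F =>
  ⟨A, hA, fun p _ => by simpa⟩

theorem wordOp_mem_adjoin (V : ι → E →L[ℂ] E) (w : List ι) :
    wordOp V w ∈ Algebra.adjoin ℂ (Set.range V) := by
  induction w with
  | nil => exact one_mem _
  | cons i w ih => rw [wordOp_cons]; exact mul_mem (Algebra.subset_adjoin ⟨i, rfl⟩) ih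

theorem mem_span_wordOp_of_mem_adjoin {V : ι → E →L[ℂ] E} {A : E →L[ℂ] E}
    (hA : A ∈ Algebra.adjoin ℂ (Set.range V)) : A ∈ Submodule.span ℂ (Set.range (wordOp V)) := by
  induction hA using Algebra.adjoin_induction with
  | mem x hx =>
    obtain ⟨i, rfl⟩ := hx
    exact Submodule.subset_span ⟨[i], by simp [wordOp_cons]⟩
  | algebraMap r =>
    rw [Algebra.algebraMap_eq_smul_one]
    exact Submodule.smul_mem _ _ (Submodule.subset_span ⟨[], rfl⟩)
  | add x y _ _ hx hy => exact Submodule.add_mem _ hx hy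
  | mul x y _ _ hx hy =>
    have h : x * y ∈ Submodule.span ℂ (Set.range (wordOp V)) * Submodule.span ℂ (Set.range (wordOp V)) :=
      Submodule.mul_mem_mul hx hy
    rw [Submodule.span_mul_span] at h
    refine Submodule.span_mono ?_ h
    rintro _ ⟨_, ⟨w, rfl⟩, _, ⟨w', rfl⟩, rfl⟩
    exact ⟨w ++ w', wordOp_append _ _ _⟩

theorem IsSelfAdjointRow.not_isWandering {V : ι → E →L[ℂ] E}
    (hV : IsRowIsometry V) [Nonempty ι] (h : IsSelfAdjointRow V) (ζ : E) : ¬ IsWandering V ζ := by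
  intro hζ
  obtain ⟨i⟩ := ‹Nonempty ι›
  obtain ⟨B, hB, hadj⟩ := h (V i) (subset_wotClosure _ (Algebra.subset_adjoin ⟨i, rfl⟩))
  obtain ⟨P, hP, hlt⟩ := hB 1 one_pos {(ζ, V i ζ)}
  have h1 : ⟪ζ, B (V i ζ)⟫ = 1 := by
    rw [← hadj, hV.inner_map_map, inner_self_eq_norm_sq_to_K, hζ.1]; simp
  have h2 : ⟪ζ, P (V i ζ)⟫ = 0 := by
    have hP' := mem_span_wordOp_of_mem_adjoin hP
    clear hlt hP
    induction hP' using Submodule.span_induction with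
    | mem x hx =>
      obtain ⟨w, rfl⟩ := hx
      have := hζ.2 [] (w ++ [i])
      simpa [wordOp_append_apply, wordOp_cons] using this
    | zero => simp
    | add x y _ _ hx hy => simp_all
    | smul c x _ hx => simp_all
  have := hlt _ (Finset.mem_singleton_self _)
  simp only [_root_.sub_apply, inner_sub_right, h1, h2] at this
  simp at this

end SelfAdjoint

section Ampliation

variable {E ι α : Type*} [NormedAddCommGroup E] [InnerProductSpace ℂ E] [Fintype α]

/-- The operator acting as `A` on each coordinate. -/
def ampliation (α : Type*) [Fintype α] (A : E →L[ℂ] E) :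
    PiLp 2 (fun _ : α => E) →L[ℂ] PiLp 2 (fun _ : α => E) :=
  ((PiLp.continuousLinearEquiv 2 ℂ fun _ : α => E).symm.toContinuousLinearMap.comp
    (ContinuousLinearMap.pi fun a => A.comp (ContinuousLinearMap.proj a))).comp
    (PiLp.continuousLinearEquiv 2 ℂ fun _ : α => E).toContinuousLinearMap

@[simp] theorem ampliation_apply (A : E →L[ℂ] E) (x : PiLp 2 (fun _ : α => E)) (a : α) :
    ampliation α A x a = A (x a) := rfl

theorem wordOp_ampliation_apply (V : ι → E →L[ℂ] E) (w : List ι) (x : PiLp 2 (fun _ : α => E))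
    (a : α) : wordOp (fun i => ampliation α (V i)) w x a = wordOp V w (x a) := by
  induction w with
  | nil => rfl
  | cons i w ih => rw [wordOp_cons_apply, wordOp_cons_apply, ampliation_apply, ih]

theorem IsRowIsometry.ampliation {V : ι → E →L[ℂ] E} (hV : IsRowIsometry V) :
    IsRowIsometry fun i => ampliation α (V i) := by
  intro i j x y
  simp only [PiLp.inner_apply, ampliation_apply, hV i j]
  split_ifs <;> simp

theorem IsAC.ampliation_apply {V : ι → E →L[ℂ] E} {x : PiLp 2 (fun _ : α => E)}
    (hx : IsAC (fun i => _root_.ampliation α (V i)) x) (a : α) : IsAC V (x a) := by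
  obtain ⟨C, hC⟩ := hx
  refine ⟨C, fun y => ?_⟩
  have h := hC (PiLp.single 2 a y)
  have h1 : orbitSum (fun i => _root_.ampliation α (V i)) x (PiLp.single 2 a y)
      = orbitSum V (x a) y := by
    unfold orbitSum
    congr 1
    funext w
    rw [PiLp.inner_apply, Finset.sum_eq_single a]
    · rw [wordOp_ampliation_apply]; simp
    · intro b _ hb
      simp [hb]
    · simp
  have h2 : ‖PiLp.single 2 (β := fun _ : α => E) a y‖ₑ = ‖y‖ₑ := by
    rw [← ofReal_norm, ← ofReal_norm, PiLp.norm_single]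
  rwa [h1, h2] at h

end Ampliation

section WOT

variable {E ι : Type*} [NormedAddCommGroup E] [InnerProductSpace ℂ E]

theorem add_mem_wotClosure {W : Submodule ℂ (E →L[ℂ] E)} {A B : E →L[ℂ] E}
    (hA : A ∈ wotClosure (W : Set (E →L[ℂ] E))) (hB : B ∈ wotClosure (W : Set (E →L[ℂ] E))) :
    A + B ∈ wotClosure (W : Set (E →L[ℂ] E)) := by
  intro ε hε F
  obtain ⟨A', hA', h1⟩ := hA (ε / 2) (by positivity) F
  obtain ⟨B', hB', h2⟩ := hB (ε / 2) (by positivity) F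
  refine ⟨A' + B', W.add_mem hA' hB', fun p hp => ?_⟩
  rw [add_sub_add_comm, _root_.add_apply, inner_add_right]
  refine (norm_add_le _ _).trans_lt ?_
  linarith [h1 p hp, h2 p hp]

theorem smul_mem_wotClosure {W : Submodule ℂ (E →L[ℂ] E)} (c : ℂ) {A : E →L[ℂ] E}
    (hA : A ∈ wotClosure (W : Set (E →L[ℂ] E))) :
    c • A ∈ wotClosure (W : Set (E →L[ℂ] E)) := by
  intro ε hε F
  obtain ⟨A', hA', h1⟩ := hA (ε / (‖c‖ + 1)) (by positivity) F
  refine ⟨c • A', W.smul_mem c hA', fun p hp => ?_⟩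
  rw [← smul_sub, _root_.smul_apply, inner_smul_right, norm_mul]
  have := h1 p hp
  rw [lt_div_iff₀ (by positivity)] at this
  nlinarith [norm_nonneg (⟪p.1, (A - A') p.2⟫ : ℂ), norm_nonneg c]

variable [CompleteSpace E]

theorem IsRowIsometry.star_wordOp_mem_genWotAlg {V : ι → E →L[ℂ] E} (hV : IsRowIsometry V)
    (h1 : (1 : E →L[ℂ] E) ∈
      wotClosure (Submodule.span ℂ {A | ∃ w : List ι, w ≠ [] ∧ A = wordOp V w} :
        Set (E →L[ℂ] E)))
    (w : List ι) : star (wordOp V w) ∈ genWotAlg (Set.range V) := by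
  have hmem : ∀ i, ∀ B ∈ Submodule.span ℂ {A | ∃ w : List ι, w ≠ [] ∧ A = wordOp V w},
      star (V i) * B ∈ Algebra.adjoin ℂ (Set.range V) := by
    intro i B hB
    induction hB using Submodule.span_induction with
    | mem x hx =>
      obtain ⟨w, hw, rfl⟩ := hx
      obtain ⟨j, w, rfl⟩ := List.exists_cons_of_ne_nil hw
      have : star (V i) * wordOp V (j :: w) = if i = j then wordOp V w else 0 := by
        ext x
        rw [mul_apply_eq_comp, wordOp_cons_apply]
        split_ifs with hij
        · subst hij; rw [hV.star_apply_self]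
        · rw [hV.star_apply_of_ne hij]; rfl
      rw [this]
      split_ifs
      · exact wordOp_mem_adjoin V w
      · exact zero_mem _
    | zero => simp
    | add x y _ _ hx hy => rw [mul_add]; exact add_mem hx hy
    | smul c x _ hx => rw [mul_smul_comm]; exact Subalgebra.smul_mem _ hx c
  induction w with
  | nil => exact subset_wotClosure _ (by simp)
  | cons i w ih =>
    intro ε hε F
    obtain ⟨B, hB, hB'⟩ := h1 (ε / 2) (by positivity)
      (F.image fun p => (V i (wordOp V w p.1), p.2))
    obtain ⟨A, hA, hA'⟩ := ih (ε / 2) (by positivity)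
      (F.image fun p => (p.1, (star (V i) * B) p.2))
    refine ⟨A * (star (V i) * B), mul_mem hA (hmem i B hB), fun p hp => ?_⟩
    have e1 := hB' _ (Finset.mem_image_of_mem _ hp)
    have e2 := hA' _ (Finset.mem_image_of_mem _ hp)
    have e3 : ⟪p.1, (star (wordOp V (i :: w)) - A * (star (V i) * B)) p.2⟫
        = ⟪V i (wordOp V w p.1), (1 - B) p.2⟫
          + ⟪p.1, (star (wordOp V w) - A) ((star (V i) * B) p.2)⟫ := by
      simp [star_wordOp_cons_apply, inner_star_right]
    rw [e3]
    refine (norm_add_le _ _).trans_lt ?_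
    linarith

theorem isSelfAdjointRow_of_one_mem {V : ι → E →L[ℂ] E} (hV : IsRowIsometry V)
    (h1 : (1 : E →L[ℂ] E) ∈
      wotClosure (Submodule.span ℂ {A | ∃ w : List ι, w ≠ [] ∧ A = wordOp V w} :
        Set (E →L[ℂ] E))) : IsSelfAdjointRow V := by
  have hstar : ∀ P ∈ Algebra.adjoin ℂ (Set.range V), star P ∈ genWotAlg (Set.range V) := by
    intro P hP
    have hP' := mem_span_wordOp_of_mem_adjoin hP
    clear hP
    have hco : genWotAlg (Set.range V) =
      wotClosure (Subalgebra.toSubmodule (Algebra.adjoin ℂ (Set.range V)) : Set (E →L[ℂ] E)) := rfl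
    induction hP' using Submodule.span_induction with
    | mem x hx =>
      obtain ⟨w, rfl⟩ := hx
      exact IsRowIsometry.star_wordOp_mem_genWotAlg hV h1 w
    | zero => rw [star_zero]; exact subset_wotClosure _ (zero_mem _)
    | add x y _ _ hx hy =>
      rw [star_add, hco]
      rw [hco] at hx hy
      exact add_mem_wotClosure hx hy
    | smul c x _ hx =>
      rw [star_smul, hco]
      rw [hco] at hx
      exact smul_mem_wotClosure _ hx
  refine fun A hA => ⟨star A, fun ε hε F => ?_, fun x y => (inner_star_right A x y).symm⟩
  obtain ⟨P, hP, hP'⟩ := hA (ε / 2) (by positivity) (F.image Prod.swap)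
  obtain ⟨B, hB, hB'⟩ := hstar P hP (ε / 2) (by positivity) F
  refine ⟨B, hB, fun p hp => ?_⟩
  have e1 := hP' _ (Finset.mem_image_of_mem _ hp)
  have e2 := hB' p hp
  have e3 : ⟪p.1, (star A - B) p.2⟫ =
      starRingEnd ℂ ⟪p.swap.1, (A - P) p.swap.2⟫ + ⟪p.1, (star P - B) p.2⟫ := by
    rw [inner_conj_symm]
    simp [inner_sub_left, inner_star_right]
  rw [e3]
  refine (norm_add_le _ _).trans_lt ?_
  rw [RCLike.norm_conj]
  linarith

/-- A row-isometry without nonzero absolutely continuous vectors is singular. -/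
theorem IsRowIsometry.isSelfAdjointRow {V : ι → E →L[ℂ] E} (hV : IsRowIsometry V)
    (h : ∀ x, IsAC V x → x = 0) : IsSelfAdjointRow V := by
  refine isSelfAdjointRow_of_one_mem hV ?_
  by_contra hn
  simp only [wotClosure, Set.mem_ofPred_eq, not_forall] at hn
  obtain ⟨ε, hε, F, hF⟩ := hn
  set J := Submodule.span ℂ {A | ∃ w : List ι, w ≠ [] ∧ A = wordOp V w} with hJ
  let Λ : (E →L[ℂ] E) →ₗ[ℂ] (F → ℂ) :=
    { toFun := fun B p => ⟪p.1.1, B p.1.2⟫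
      map_add' := fun A B => by ext p; simp
      map_smul' := fun c A => by ext p; simp }
  have hnot : Λ 1 ∉ J.map Λ := by
    rintro ⟨B, hB, hBe⟩
    refine hF ⟨B, hB, fun p hp => ?_⟩
    have := congrFun hBe ⟨p, hp⟩
    simp only [Λ, LinearMap.coe_mk, AddHom.coe_mk] at this
    rw [_root_.sub_apply, inner_sub_right, this]
    simpa using hε
  obtain ⟨φ, hφ1, hφ⟩ := Submodule.exists_le_ker_of_notMem hnot
  have hφsum : ∀ f : F → ℂ, φ f = ∑ p, f p * φ (Pi.single p 1) := fun f => by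
    conv_lhs => rw [← LinearMap.sum_single_apply (fun _ => ℂ) f, map_sum]
    refine Finset.sum_congr rfl fun p _ => ?_
    rw [← smul_eq_mul, ← map_smul]
    congr 1
    ext q
    by_cases hq : q = p <;> simp [hq]
  set c : F → ℂ := fun p => φ (Pi.single p 1) with hc
  let X : PiLp 2 (fun _ : F => E) := WithLp.toLp 2 fun p => p.1.2
  let Y : PiLp 2 (fun _ : F => E) := WithLp.toLp 2 fun p => starRingEnd ℂ (c p) • p.1.1
  have hXY : ∀ w : List ι, ⟪wordOp (fun i => _root_.ampliation F (V i)) w X, Y⟫ =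
      starRingEnd ℂ (φ (Λ (wordOp V w))) := by
    intro w
    rw [hφsum, map_sum, PiLp.inner_apply]
    refine Finset.sum_congr rfl fun p _ => ?_
    rw [wordOp_ampliation_apply]
    simp only [X, Y, Λ, LinearMap.coe_mk, AddHom.coe_mk, inner_smul_right, map_mul, inner_conj_symm]
    rw [mul_comm]
  obtain ⟨ζ, hζ⟩ := (hV.ampliation (α := F)).exists_isWandering (x := X) (y := Y)
    (fun w hw => by
      have : φ (Λ (wordOp V w)) = 0 :=
        hφ (Submodule.mem_map_of_mem (Submodule.subset_span ⟨w, hw, rfl⟩))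
      rw [hXY, this, map_zero])
    (by
      have := hXY []
      simp only [wordOp_nil, one_apply_eq_self] at this
      rw [this]
      simpa using hφ1)
  have h0 : ζ = 0 := by
    ext p
    exact h _ (hζ.isAC.ampliation_apply p)
  have := hζ.1
  rw [h0] at this
  simp at this

end WOT

section SmallVectors

theorem sum_range_le_of_tsum_tail_le {f g : ℕ → ℝ≥0∞} {J : ℕ} {η ε : ℝ≥0∞}
    (h1 : ∀ a < J, f a ≤ η) (h2 : ∀ a, f a ≤ g a) (h3 : ∑' a, g (a + J) ≤ ε) (k : ℕ) :
    ∑ a ∈ Finset.range k, f a ≤ J * η + ε := by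
  have h4 : ∑ a ∈ Finset.range J, f a ≤ J * η := by
    simpa using Finset.sum_le_card_nsmul (Finset.range J) f η fun a ha => h1 a (Finset.mem_range.1 ha)
  have h5 : ∑' a, f (a + J) ≤ ε := (ENNReal.tsum_le_tsum fun a => h2 (a + J)).trans h3
  have h6 : ∑ a ∈ Finset.range J, f a + ∑' a, f (a + J) = ∑' a, f a :=
    Summable.sum_add_tsum_nat_add' ENNReal.summable
  calc ∑ a ∈ Finset.range k, f a ≤ ∑' a, f a := ENNReal.sum_le_tsum _
    _ = ∑ a ∈ Finset.range J, f a + ∑' a, f (a + J) := h6.symm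
    _ ≤ J * η + ε := add_le_add h4 h5

variable {E ι : Type*} [NormedAddCommGroup E] [InnerProductSpace ℂ E]

theorem enorm_inner_sq_le (x y : E) : ‖⟪x, y⟫‖ₑ ^ 2 ≤ ‖x‖ₑ ^ 2 * ‖y‖ₑ ^ 2 := by
  rw [← mul_pow]
  gcongr
  simp only [← ofReal_norm]
  rw [← ENNReal.ofReal_mul (norm_nonneg _)]
  exact ENNReal.ofReal_le_ofReal (norm_inner_le_norm x y)

theorem enorm_inner_comm (x y : E) : ‖⟪x, y⟫‖ₑ = ‖⟪y, x⟫‖ₑ := by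
  rw [← ofReal_norm, ← ofReal_norm, norm_inner_symm]

variable {V : ι → E →L[ℂ] E}

theorem exists_sum_orbitSum_le {A : Finset E} (hA : ∀ a ∈ A, IsAC V a) :
    ∃ C : ℝ≥0, ∀ y, ∑ a ∈ A, orbitSum V a y ≤ C * ‖y‖ₑ ^ 2 := by
  induction A using Finset.induction_on with
  | empty => exact ⟨0, by simp⟩
  | insert a A ha ih =>
    obtain ⟨C, hC⟩ := ih fun b hb => hA b (Finset.mem_insert_of_mem hb)
    obtain ⟨C', hC'⟩ := hA a (Finset.mem_insert_self _ _)
    refine ⟨C' + C, fun y => ?_⟩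
    rw [Finset.sum_insert ha, ENNReal.coe_add, add_mul]
    exact add_le_add (hC' y) (hC y)

theorem exists_forall_orbitTail_le {A : Finset E} (hA : ∀ a ∈ A, IsAC V a) (y : E) {ε : ℝ≥0∞}
    (hε : 0 < ε) : ∃ d, ∀ a ∈ A, orbitTail V d a y ≤ ε := by
  induction A using Finset.induction_on with
  | empty => exact ⟨0, by simp⟩
  | insert a A ha ih =>
    obtain ⟨d, hd⟩ := ih fun b hb => hA b (Finset.mem_insert_of_mem hb)
    obtain ⟨d', hd'⟩ := exists_orbitTail_le ((hA a (Finset.mem_insert_self _ _)).orbitSum_ne_top y) hε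
    refine ⟨max d d', fun b hb => ?_⟩
    rcases Finset.mem_insert.1 hb with rfl | hb
    · exact (orbitTail_anti (le_max_right _ _) _ _).trans hd'
    · exact (orbitTail_anti (le_max_left _ _) _ _).trans (hd b hb)

variable [CompleteSpace E] [Fintype ι]

theorem IsCuntzRow.exists_sum_orbitSum_lt (hV : IsCuntzRow V) [Nontrivial E] {A : Finset E}
    (hA : ∀ a ∈ A, IsAC V a) {δ : ℝ≥0∞} (hδ : 0 < δ) :
    ∃ b : E, ‖b‖ = 1 ∧ ∑ a ∈ A, orbitSum V a b < δ := by
  by_contra! hcon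
  have h0 : ∀ b : E, δ * ‖b‖ₑ ^ 2 ≤ ∑ a ∈ A, orbitSum V a b := by
    intro b
    by_cases hb : b = 0
    · simp [hb]
    have hn : ‖b‖ ≠ 0 := by simpa using hb
    have h1 := hcon (((‖b‖⁻¹ : ℝ) : ℂ) • b) (by rw [norm_smul]; simp [hn])
    simp only [orbitSum_smul_right] at h1
    rw [← Finset.mul_sum] at h1
    have h2 : ‖((‖b‖⁻¹ : ℝ) : ℂ)‖ₑ ^ 2 * ‖b‖ₑ ^ 2 = 1 := by
      rw [← mul_pow, ← enorm_smul, ← ofReal_norm, norm_smul]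
      simp [hn]
    calc δ * ‖b‖ₑ ^ 2 ≤ (‖((‖b‖⁻¹ : ℝ) : ℂ)‖ₑ ^ 2 * ∑ a ∈ A, orbitSum V a b) * ‖b‖ₑ ^ 2 := by gcongr
      _ = (‖((‖b‖⁻¹ : ℝ) : ℂ)‖ₑ ^ 2 * ‖b‖ₑ ^ 2) * ∑ a ∈ A, orbitSum V a b := by ring
      _ = _ := by rw [h2, one_mul]
  have ht : ∀ d (b : E), δ * ‖b‖ₑ ^ 2 ≤ ∑ a ∈ A, orbitTail V d a b := by
    intro d
    induction d with
    | zero => simpa [orbitTail_zero] using h0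
    | succ d ih =>
      intro b
      simp only [orbitTail_succ]
      rw [Finset.sum_comm, ← hV.sum_enorm_star b, Finset.mul_sum]
      exact Finset.sum_le_sum fun i _ => ih _
  obtain ⟨b, hb⟩ := exists_ne (0 : E)
  have hpos : δ * ‖b‖ₑ ^ 2 ≠ 0 := by simp [hb, hδ.ne']
  obtain ⟨η, hη, hlt⟩ := ENNReal.exists_nnreal_pos_mul_lt (a := (A.card : ℝ≥0∞)) (by simp) hpos
  obtain ⟨d, hd⟩ := exists_forall_orbitTail_le hA b (ε := η) (by simpa using hη)
  refine absurd (ht d b) (not_le.2 (lt_of_le_of_lt (Finset.sum_le_sum hd) ?_))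
  simpa [mul_comm] using hlt

theorem IsCuntzRow.exists_isAC_orbitSum_le (hV : IsCuntzRow V) [Nontrivial E]
    (hdense : Dense (acSubmodule V : Set E)) {A : Finset E}
    (hA : ∀ a ∈ A, IsAC V a) {δ : ℝ≥0∞} (hδ : 0 < δ) :
    ∃ b : E, IsAC V b ∧ ‖b‖ = 1 ∧ ∀ a ∈ A, orbitSum V a b ≤ δ := by
  obtain ⟨C, hC⟩ := exists_sum_orbitSum_le hA
  have hδ' : 0 < δ / 16 := ENNReal.div_pos hδ.ne' (by simp)
  obtain ⟨b, hb1, hb⟩ := hV.exists_sum_orbitSum_lt hA hδ'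
  have hc : Filter.Tendsto (fun c : E => (C : ℝ≥0∞) * ‖c - b‖ₑ ^ 2) (nhds b) (nhds 0) := by
    have : Continuous fun c : E => (C : ℝ≥0∞) * ‖c - b‖ₑ ^ 2 :=
      (ENNReal.continuous_const_mul (by simp)).comp
        ((ENNReal.continuous_pow 2).comp (continuous_id.sub continuous_const).enorm)
    simpa using this.tendsto b
  have hn : ∀ᶠ c : E in nhds b, 1 / 2 < ‖c‖ :=
    continuous_norm.continuousAt.eventually (lt_mem_nhds (by simp only [hb1]; norm_num))
  obtain ⟨c, hcA, hc1, hc2⟩ := ((mem_closure_iff_frequently.1 (hdense b)).and_eventually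
    ((hc.eventually (gt_mem_nhds hδ')).and hn)).exists
  have hcn : ‖c‖ ≠ 0 := by linarith
  refine ⟨((‖c‖⁻¹ : ℝ) : ℂ) • c, IsAC.smul _ hcA, by rw [norm_smul]; simp [hcn], fun a ha => ?_⟩
  have h1 : orbitSum V a c ≤ 4 * (δ / 16) := by
    calc orbitSum V a c ≤ ∑ a ∈ A, orbitSum V a c :=
          Finset.single_le_sum (f := fun a => orbitSum V a c) (fun _ _ => zero_le) ha
      _ = ∑ a ∈ A, orbitSum V a (b + (c - b)) := by simp
      _ ≤ ∑ a ∈ A, (2 * orbitSum V a b + 2 * orbitSum V a (c - b)) :=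
          Finset.sum_le_sum fun a _ => orbitSum_add_right a b (c - b)
      _ = 2 * ∑ a ∈ A, orbitSum V a b + 2 * ∑ a ∈ A, orbitSum V a (c - b) := by
          rw [Finset.sum_add_distrib, Finset.mul_sum, Finset.mul_sum]
      _ ≤ 2 * (δ / 16) + 2 * (δ / 16) := by
          gcongr
          exact (hC _).trans hc1.le
      _ = 4 * (δ / 16) := by ring
  have h2 : ‖((‖c‖⁻¹ : ℝ) : ℂ)‖ₑ ≤ 2 := by
    rw [← ofReal_norm, Complex.norm_real, norm_inv, norm_norm]
    have : ‖c‖⁻¹ ≤ 2 := by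
      rw [inv_le_comm₀ (by linarith) (by norm_num)]; linarith
    simpa using ENNReal.ofReal_le_ofReal this
  rw [orbitSum_smul_right]
  calc ‖((‖c‖⁻¹ : ℝ) : ℂ)‖ₑ ^ 2 * orbitSum V a c ≤ 2 ^ 2 * (4 * (δ / 16)) := by gcongr
    _ = 16 * (δ / 16) := by ring
    _ = δ := ENNReal.mul_div_cancel (by simp) (by simp)

omit [CompleteSpace E] [Fintype ι] in
theorem inner_replicate_eq_zero (hV : IsRowIsometry V) {i j : ι} (hij : i ≠ j) (b b' : E) (k : ℕ) :
    ∀ (a : ℕ) (w : List ι), k ≤ a → (w = [] → k < a) → ¬ (List.replicate k i ++ [j] <+: w) →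
      ⟪wordOp V w (wordOp V (List.replicate a i ++ [j]) b),
        wordOp V (List.replicate k i ++ [j]) b'⟫ = 0 := by
  induction k with
  | zero =>
    intro a w _ hw hpre
    cases w with
    | nil =>
      obtain ⟨a, rfl⟩ := Nat.exists_eq_succ_of_ne_zero (hw rfl).ne'
      simp only [List.replicate_succ, List.cons_append, wordOp_cons_apply, wordOp_nil,
        List.replicate_zero, List.nil_append]
      exact hV.inner_map_of_ne hij _ _
    | cons c w =>
      simp only [wordOp_cons_apply, List.replicate_zero, List.nil_append]
      refine hV.inner_map_of_ne (fun h => hpre ?_) _ _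
      subst h
      exact ⟨w, rfl⟩
  | succ k ih =>
    intro a w ha hw hpre
    cases w with
    | nil =>
      obtain ⟨a, rfl⟩ := Nat.exists_eq_succ_of_ne_zero (show a ≠ 0 by omega)
      have := ih a [] (by omega) (fun _ => by have := hw rfl; omega) (by simp)
      simpa only [List.replicate_succ, List.cons_append, wordOp_cons_apply, wordOp_nil,
        one_apply_eq_self, hV.inner_map_map] using this
    | cons c w =>
      rw [List.replicate_succ (n := k), List.cons_append, wordOp_cons_apply, wordOp_cons_apply, hV]
      split_ifs with h
      · subst h
        refine ih a w (by omega) (fun _ => by omega) fun h => hpre ?_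
        rw [List.replicate_succ, List.cons_append]
        exact List.cons_prefix_cons.2 ⟨rfl, h⟩
      · rfl

/-- The deviation of the coefficients of `V_v z` along the orbit of `z` from a delta function. -/
def orbitDefect (V : ι → E →L[ℂ] E) (v : List ι) (z : E) : ℝ≥0∞ :=
  sqSum fun w => ⟪wordOp V w z, wordOp V v z⟫ - if w = v then 1 else 0

omit [CompleteSpace E] [Fintype ι] in
theorem orbitDefect_replicate (hV : IsRowIsometry V) {i j : ι} (hij : i ≠ j) {b : E}
    (hb : ‖b‖ = 1) (k : ℕ) :
    orbitDefect V [] (wordOp V (List.replicate k i ++ [j]) b) =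
      orbitSum V (wordOp V (List.replicate k i ++ [j]) b) b := by
  set s := List.replicate k i ++ [j] with hs
  have hs0 : s ≠ [] := by simp [hs]
  set z := wordOp V s b with hz
  unfold orbitDefect orbitSum sqSum
  have hinj : Function.Injective fun v : List ι => s ++ v := fun a b h => by simpa using h
  rw [← hinj.tsum_eq (f := fun w => ‖⟪wordOp V w z, wordOp V [] z⟫ - if w = [] then 1 else 0‖ₑ ^ 2)]
  · refine tsum_congr fun w => ?_
    rw [if_neg (by simp [hs0]), wordOp_append_apply, wordOp_nil, one_apply_eq_self, sub_zero]
    conv_lhs => rw [hz]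
    rw [hV.inner_wordOp]
  · intro w hw
    by_contra hpre
    refine hw ?_
    by_cases hw0 : w = []
    · have : ‖z‖ = 1 := by rw [hz, hV.norm_wordOp, hb]
      simp [hw0, inner_self_eq_norm_sq_to_K, this]
    · have := inner_replicate_eq_zero hV hij b b k k w le_rfl (fun h => absurd h hw0)
        (fun ⟨t, ht⟩ => hpre ⟨t, ht⟩)
      simp only [wordOp_nil, one_apply_eq_self, hw0, if_false, sub_zero]
      rw [hz, this]
      simp

theorem orbitSum_replicate (hV : IsRowIsometry V) (i j : ι) (x b : E) (k : ℕ) :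
    orbitSum V x (wordOp V (List.replicate k i ++ [j]) b) = orbitSum V x b +
      ∑ a ∈ Finset.range (k + 1), ‖⟪x, wordOp V (List.replicate a i ++ [j]) b⟫‖ₑ ^ 2 := by
  induction k with
  | zero => simp [wordOp_cons, hV.orbitSum_map_right, add_comm]
  | succ k ih =>
    rw [Finset.sum_range_succ, ← add_assoc, ← ih, List.replicate_succ, List.cons_append,
      wordOp_cons_apply, hV.orbitSum_map_right, add_comm]

theorem IsCuntzRow.tsum_enorm_star_replicate_le (hV : IsCuntzRow V) {i j : ι} (hij : i ≠ j)
    (x : E) : ∑' a : ℕ, ‖star (wordOp V (List.replicate a i ++ [j])) x‖ₑ ^ 2 ≤ ‖x‖ₑ ^ 2 := by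
  have h2 : ∀ x : E, ‖star (V i) x‖ₑ ^ 2 + ‖star (V j) x‖ₑ ^ 2 ≤ ‖x‖ₑ ^ 2 := fun x => by
    rw [← hV.sum_enorm_star x, ← Finset.sum_pair (f := fun i => ‖star (V i) x‖ₑ ^ 2) hij]
    exact Finset.sum_le_sum_of_subset (Finset.subset_univ _)
  rw [ENNReal.tsum_eq_iSup_nat]
  refine iSup_le fun N => ?_
  induction N generalizing x with
  | zero => simp
  | succ N ih =>
    rw [Finset.sum_range_succ']
    refine le_trans ?_ (h2 x)
    gcongr
    · simpa [List.replicate_succ, star_wordOp_cons_apply] using ih (star (V i) x)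
    · simp [wordOp_cons]

theorem IsCuntzRow.exists_almost_wandering (hV : IsCuntzRow V) [Nontrivial E] [Nontrivial ι]
    (hdense : Dense (acSubmodule V : Set E)) {x : E} (hx : IsAC V x) (y : E) {δ : ℝ≥0∞}
    (hδ : 0 < δ) : ∃ z, IsAC V z ∧ ‖z‖ = 1 ∧ orbitDefect V [] z ≤ δ ∧ orbitSum V z y ≤ δ ∧
      orbitSum V z x ≤ δ ∧ orbitSum V x z ≤ δ := by
  obtain ⟨i, j, hij⟩ := exists_pair_ne ι
  have hδ3 : 0 < δ / 3 := ENNReal.div_pos hδ.ne' (by simp)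
  set c : ℕ → E := fun a => star (wordOp V (List.replicate a i ++ [j])) x with hc
  have hcs : ∑' a, ‖c a‖ₑ ^ 2 ≠ ⊤ :=
    ne_top_of_le_ne_top (by finiteness) (hV.tsum_enorm_star_replicate_le hij x)
  obtain ⟨J, hJ⟩ := ((ENNReal.tendsto_sum_nat_add _ hcs).eventually (gt_mem_nhds hδ3)).exists
  obtain ⟨η, hη, hηlt⟩ := ENNReal.exists_nnreal_pos_mul_lt (a := (4 * J + 1 : ℝ≥0∞))
    (by finiteness) hδ3.ne'
  have hη0 : (0 : ℝ≥0∞) < η := by simpa using hη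
  have happ : ∀ a, ∃ b, IsAC V b ∧ ‖c a - b‖ₑ ^ 2 ≤ η := by
    intro a
    have hcont : Continuous fun b : E => ‖c a - b‖ₑ ^ 2 :=
      (ENNReal.continuous_pow 2).comp (continuous_const.sub continuous_id).enorm
    have h0 : ∀ᶠ b in nhds (c a), ‖c a - b‖ₑ ^ 2 < η :=
      hcont.continuousAt.eventually (gt_mem_nhds (by simpa using hη))
    obtain ⟨b, hb, hb'⟩ := ((mem_closure_iff_frequently.1 (hdense (c a))).and_eventually h0).exists
    exact ⟨b, hb, hb'.le⟩
  choose a' ha' hca' using happ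
  obtain ⟨b, hb, hb1, hbA⟩ := hV.exists_isAC_orbitSum_le hdense
    (A := insert x ((Finset.range J).image a')) (δ := η) (by
      intro a ha
      rcases Finset.mem_insert.1 ha with rfl | ha
      · exact hx
      · obtain ⟨t, _, rfl⟩ := Finset.mem_image.1 ha
        exact ha' t) hη0
  have hbx : orbitSum V x b ≤ η := hbA x (Finset.mem_insert_self _ _)
  have hbc : ∀ a < J, ‖⟪c a, b⟫‖ₑ ^ 2 ≤ 4 * η := by
    intro t ht
    have h1 : orbitSum V (a' t) b ≤ η :=
      hbA _ (Finset.mem_insert_of_mem (Finset.mem_image_of_mem _ (Finset.mem_range.2 ht)))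
    have h2 : ⟪c t, b⟫ = ⟪c t - a' t, b⟫ + ⟪a' t, b⟫ := by simp
    rw [h2]
    refine (enorm_add_sq_le _ _).trans ?_
    have h3 : ‖⟪c t - a' t, b⟫‖ₑ ^ 2 ≤ η := by
      refine (enorm_inner_sq_le _ _).trans ?_
      have : ‖b‖ₑ = 1 := by rw [← ofReal_norm, hb1]; simp
      simpa [this] using hca' t
    calc _ ≤ 2 * (η : ℝ≥0∞) + 2 * η := by
          gcongr
          exact (enorm_inner_sq_le_orbitSum _ _).trans h1
      _ = 4 * η := by ring
  obtain ⟨d, hd⟩ := exists_orbitTail_le (hb.orbitSum_ne_top b) hδ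
  obtain ⟨d', hd'⟩ := exists_orbitTail_le (hb.orbitSum_ne_top y) hδ
  obtain ⟨d'', hd''⟩ := exists_orbitTail_le (hb.orbitSum_ne_top x) hδ
  set k := d + d' + d'' with hk
  have htail : ∀ u D, D ≤ k → orbitTail V D b u ≤ δ →
      orbitSum V (wordOp V (List.replicate k i ++ [j]) b) u ≤ δ := by
    intro u D hD hu
    refine (orbitSum_wordOp_left_le_tail _ _ _).trans ((orbitTail_anti ?_ _ _).trans hu)
    simp; omega
  refine ⟨wordOp V (List.replicate k i ++ [j]) b, hb.wordOp _, by rw [hV.iso.norm_wordOp, hb1], ?_,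
    htail y d' (by omega) hd', htail x d'' (by omega) hd'', ?_⟩
  · rw [orbitDefect_replicate hV.iso hij hb1]
    exact htail b d (by omega) hd
  · rw [orbitSum_replicate hV.iso]
    have hce : ∀ a, ⟪x, wordOp V (List.replicate a i ++ [j]) b⟫ = ⟪c a, b⟫ := fun a =>
      (inner_star_left _ _ _).symm
    simp only [hce]
    have hb1' : ‖b‖ₑ = 1 := by rw [← ofReal_norm, hb1]; simp
    have hsum := sum_range_le_of_tsum_tail_le hbc
      (fun a => by simpa [hb1'] using enorm_inner_sq_le (c a) b) hJ.le (k + 1)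
    calc _ ≤ (η : ℝ≥0∞) + (J * (4 * η) + δ / 3) := add_le_add hbx hsum
      _ = η * (4 * J + 1) + δ / 3 := by ring
      _ ≤ δ / 3 + δ / 3 := by gcongr
      _ ≤ δ / 3 + δ / 3 + δ / 3 := le_self_add
      _ = δ := ENNReal.add_thirds δ

theorem orbitSum_wordOp_right_le (hV : IsRowIsometry V) (x z : E) (v : List ι) :
    orbitSum V x (wordOp V v z) ≤ orbitSum V x z + v.length * orbitSum V z x := by
  induction v with
  | nil => simp
  | cons i v ih =>
    have h : ‖⟪x, wordOp V (i :: v) z⟫‖ₑ ^ 2 ≤ orbitSum V z x := by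
      rw [enorm_inner_comm]
      exact ENNReal.le_tsum (f := fun w => ‖⟪wordOp V w z, x⟫‖ₑ ^ 2) (i :: v)
    rw [wordOp_cons_apply, hV.orbitSum_map_right, ← wordOp_cons_apply]
    calc _ ≤ orbitSum V z x + (orbitSum V x z + v.length * orbitSum V z x) := add_le_add h ih
      _ = _ := by push_cast [List.length_cons]; ring

omit [CompleteSpace E] in
theorem orbitDefect_le (hV : IsRowIsometry V) (z : E) (v : List ι) :
    orbitDefect V v z ≤ (v.length + 1) * orbitDefect V [] z := by
  induction v with
  | nil => simp
  | cons i v ih =>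
    have h : ‖⟪z, wordOp V (i :: v) z⟫‖ₑ ^ 2 ≤ orbitDefect V [] z := by
      rw [enorm_inner_comm]
      simpa [orbitDefect, sqSum] using ENNReal.le_tsum
        (f := fun w => ‖⟪wordOp V w z, wordOp V [] z⟫ - if w = [] then 1 else 0‖ₑ ^ 2) (i :: v)
    have h2 : orbitDefect V (i :: v) z = ‖⟪z, wordOp V (i :: v) z⟫‖ₑ ^ 2 + orbitDefect V v z := by
      rw [orbitDefect, sqSum, tsum_list_eq, Finset.sum_eq_single i]
      · simp [wordOp_cons_apply, hV.inner_map_map, orbitDefect, sqSum]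
      · intro j _ hj
        simp [wordOp_cons_apply, hV.inner_map_of_ne hj, hj]
      · simp
    rw [h2]
    calc _ ≤ orbitDefect V [] z + (v.length + 1) * orbitDefect V [] z := add_le_add h ih
      _ = _ := by push_cast [List.length_cons]; ring

end SmallVectors

section ExistsWandering

theorem exists_finset_sqSum_le {α : Type*} {f : α → ℂ} (hf : sqSum f ≠ ⊤) {η : ℝ≥0∞} (hη : 0 < η) :
    ∃ F : Finset α, sqSum (fun a => if a ∈ F then 0 else f a) ≤ η := by
  obtain ⟨s, hs⟩ := ((ENNReal.tendsto_tsum_compl_atTop_zero hf).eventually (gt_mem_nhds hη)).exists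
  refine ⟨s, le_trans (le_of_eq ?_) hs.le⟩
  rw [show ∑' b : {w // w ∉ s}, ‖f b‖ₑ ^ 2 = _ from tsum_subtype {w | w ∉ s} fun a => ‖f a‖ₑ ^ 2]
  unfold sqSum
  refine tsum_congr fun a => ?_
  by_cases ha : a ∈ s <;> simp [ha]

theorem sum_enorm_sq_le_sqSum {α : Type*} (f : α → ℂ) (F : Finset α) :
    ∑ a ∈ F, ‖f a‖ₑ ^ 2 ≤ sqSum f := ENNReal.sum_le_tsum _

variable {E ι : Type*} [NormedAddCommGroup E] [InnerProductSpace ℂ E]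

theorem enorm_sq_eq_enorm_inner (u : E) : ‖u‖ₑ ^ 2 = ‖⟪u, u⟫‖ₑ := by
  rw [← ofReal_norm, ← ofReal_norm, inner_self_eq_norm_sq_to_K, ← ENNReal.ofReal_pow (norm_nonneg _)]
  simp

/-- The deviation of the coefficients of `y` along the orbit of `x` from the delta function at
the empty word. -/
def orbitResidual (V : ι → E →L[ℂ] E) (x y : E) (w : List ι) : ℂ :=
  (if w = [] then 1 else 0) - ⟪wordOp V w x, y⟫

variable {V : ι → E →L[ℂ] E}

/-- The error term in `inner_combination`. -/
def combinationError (V : ι → E →L[ℂ] E) (F : Finset (List ι)) (r : List ι → ℂ) (z : E)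
    (w : List ι) : ℂ :=
  ∑ v ∈ F, r v * (⟪wordOp V w z, wordOp V v z⟫ - if w = v then 1 else 0)

theorem inner_combination (F : Finset (List ι)) (r : List ι → ℂ) (z : E) (w : List ι) :
    ⟪wordOp V w z, ∑ v ∈ F, r v • wordOp V v z⟫ =
      (if w ∈ F then r w else 0) + combinationError V F r z w := by
  simp [combinationError, mul_sub, Finset.sum_sub_distrib]

theorem enorm_combination_sq_le (F : Finset (List ι)) (r : List ι → ℂ) (z : E) :
    ‖∑ v ∈ F, r v • wordOp V v z‖ₑ ^ 2 ≤ 3 * sqSum r + 2 * sqSum (combinationError V F r z) := by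
  set u := ∑ v ∈ F, r v • wordOp V v z with hu
  have h1 : ⟪u, u⟫ = ∑ v ∈ F, starRingEnd ℂ (r v) * ⟪wordOp V v z, u⟫ := by
    have (t : E) : ⟪u, t⟫ = ∑ v ∈ F, starRingEnd ℂ (r v) * ⟪wordOp V v z, t⟫ := by
      simp [hu, mul_comm]
    exact this u
  have hmul : ∀ a b : ℝ≥0∞, a * b ≤ a ^ 2 + b ^ 2 := fun a b => by
    rcases le_total a b with h | h
    · calc a * b ≤ b * b := by gcongr
        _ = b ^ 2 := (sq b).symm
        _ ≤ _ := le_add_self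
    · calc a * b ≤ a * a := by gcongr
        _ = a ^ 2 := (sq a).symm
        _ ≤ _ := le_self_add
  rw [enorm_sq_eq_enorm_inner, h1]
  calc _ ≤ ∑ v ∈ F, ‖starRingEnd ℂ (r v) * ⟪wordOp V v z, u⟫‖ₑ := enorm_sum_le _ _
    _ ≤ ∑ v ∈ F, (3 * ‖r v‖ₑ ^ 2 + 2 * ‖combinationError V F r z v‖ₑ ^ 2) := by
        refine Finset.sum_le_sum fun v hv => ?_
        rw [inner_combination, if_pos hv, enorm_mul,
          show ‖starRingEnd ℂ (r v)‖ₑ = ‖r v‖ₑ by simp [enorm_eq_nnnorm]]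
        calc _ ≤ ‖r v‖ₑ ^ 2 + ‖r v + combinationError V F r z v‖ₑ ^ 2 := hmul _ _
          _ ≤ ‖r v‖ₑ ^ 2 + (2 * ‖r v‖ₑ ^ 2 + 2 * ‖combinationError V F r z v‖ₑ ^ 2) := by
            gcongr
            exact enorm_add_sq_le _ _
          _ = _ := by ring
    _ = 3 * ∑ v ∈ F, ‖r v‖ₑ ^ 2 + 2 * ∑ v ∈ F, ‖combinationError V F r z v‖ₑ ^ 2 := by
        rw [Finset.sum_add_distrib, Finset.mul_sum, Finset.mul_sum]
    _ ≤ _ := by gcongr <;> exact sum_enorm_sq_le_sqSum _ _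

theorem orbitResidual_update {x y z : E} (F : Finset (List ι)) {ε : ℝ≥0} (hε : 0 < ε)
    (w : List ι) :
    orbitResidual V (x + (ε : ℂ) • z)
        (y + (ε : ℂ)⁻¹ • ∑ v ∈ F, orbitResidual V x y v • wordOp V v z) w =
      ((if w ∈ F then 0 else orbitResidual V x y w) + -(ε : ℂ) * ⟪wordOp V w z, y⟫) +
      (-(ε : ℂ)⁻¹ * (∑ v ∈ F, orbitResidual V x y v * ⟪wordOp V w x, wordOp V v z⟫) +
        -1 * combinationError V F (orbitResidual V x y) z w) := by
  have hε' : (ε : ℂ) ≠ 0 := by exact_mod_cast hε.ne'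
  have hx : ⟪wordOp V w x, ∑ v ∈ F, orbitResidual V x y v • wordOp V v z⟫ =
      ∑ v ∈ F, orbitResidual V x y v * ⟪wordOp V w x, wordOp V v z⟫ := by
    simp
  have hz := inner_combination (V := V) F (orbitResidual V x y) z w
  have hr : ⟪wordOp V w x, y⟫ = (if w = [] then 1 else 0) - orbitResidual V x y w := by
    simp [orbitResidual]
  have hc : starRingEnd ℂ (ε : ℂ) = ε := Complex.conj_ofReal _
  rw [orbitResidual, map_add, map_smul, inner_add_left, inner_smul_left, inner_add_right,
    inner_add_right, inner_smul_right, inner_smul_right, hx, hz, hr, hc]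
  split_ifs <;> field_simp <;> ring

variable [CompleteSpace E] [Fintype ι]

theorem IsCuntzRow.exists_residual_le (hV : IsCuntzRow V) [Nontrivial E] [Nontrivial ι]
    (hdense : Dense (acSubmodule V : Set E)) {x y : E} (hx : IsAC V x) {ε : ℝ≥0} (hε : 0 < ε)
    (hr : sqSum (orbitResidual V x y) ≤ (ε : ℝ≥0∞) ^ 4) {η : ℝ≥0∞} (hη : 0 < η) :
    ∃ x' y' : E, IsAC V x' ∧ sqSum (orbitResidual V x' y') ≤ η ∧ ‖x' - x‖ ≤ ε ∧
      ‖y' - y‖ ≤ 3 * ε := by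
  set r := orbitResidual V x y with hrdef
  have hrt : sqSum r ≠ ⊤ := ne_top_of_le_ne_top (by finiteness) hr
  have hη' : 0 < η / 16 := ENNReal.div_pos hη.ne' (by simp)
  have hεe : (ε : ℝ≥0∞) ^ 4 ≠ 0 := by simp [hε.ne']
  obtain ⟨F, hF⟩ := exists_finset_sqSum_le hrt hη'
  obtain ⟨K₀, hK₀, hsum⟩ := sqSum_sum_le (α := List ι) F
  set K₁ : ℝ≥0∞ := K₀ * ∑ v ∈ F, ‖r v‖ₑ ^ 2 * (v.length + 1) with hK₁
  have hK₁t : K₁ ≠ ⊤ := by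
    refine ENNReal.mul_ne_top hK₀ (ENNReal.sum_ne_top.2 fun v _ => ?_)
    finiteness
  set a : ℝ≥0∞ := ‖-(ε : ℂ)‖ₑ ^ 2 with ha
  set b : ℝ≥0∞ := ‖-(ε : ℂ)⁻¹‖ₑ ^ 2 with hb
  obtain ⟨δ, hδ, hδlt⟩ := ENNReal.exists_nnreal_pos_mul_lt (a := a + b * K₁ + K₁)
    (b := min (η / 16) ((ε : ℝ≥0∞) ^ 4)) (by finiteness) (by simp [hη'.ne', hε.ne'])
  obtain ⟨z, hz, hz1, hzd, hzy, hzx, hxz⟩ := hV.exists_almost_wandering hdense hx y (δ := δ)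
    (by simpa using hδ)
  have hcomb : ∀ f : List ι → List ι → ℂ, (∀ v, sqSum (f v) ≤ (v.length + 1) * δ) →
      sqSum (fun w => ∑ v ∈ F, r v * f v w) ≤ K₁ * δ := by
    intro f hf
    refine (hsum fun v w => r v * f v w).trans ?_
    rw [hK₁, mul_assoc, Finset.sum_mul]
    gcongr with v _
    rw [sqSum_const_mul, mul_assoc]
    gcongr
    exact hf v
  have herr : sqSum (combinationError V F r z) ≤ K₁ * δ :=
    hcomb (fun v w => ⟪wordOp V w z, wordOp V v z⟫ - if w = v then 1 else 0) fun v => by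
      refine (orbitDefect_le hV.iso z v).trans ?_
      gcongr
  have hcross : sqSum (fun w => ∑ v ∈ F, r v * ⟪wordOp V w x, wordOp V v z⟫) ≤ K₁ * δ :=
    hcomb (fun v w => ⟪wordOp V w x, wordOp V v z⟫) fun v => by
      refine (orbitSum_wordOp_right_le hV.iso x z v).trans ?_
      calc _ ≤ (δ : ℝ≥0∞) + v.length * δ := by gcongr
        _ = _ := by ring
  have hle : (δ : ℝ≥0∞) * (a + b * K₁ + K₁) ≤ η / 16 := hδlt.le.trans (min_le_left _ _)
  have hle' : K₁ * δ ≤ (ε : ℝ≥0∞) ^ 4 := by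
    refine le_trans ?_ (hδlt.le.trans (min_le_right _ _))
    rw [mul_comm]
    gcongr
    exact le_add_self
  have hnε : ‖(ε : ℂ)‖ = ε := by simp
  refine ⟨x + (ε : ℂ) • z, y + (ε : ℂ)⁻¹ • ∑ v ∈ F, r v • wordOp V v z, hx.add (hz.smul _), ?_, ?_, ?_⟩
  · have : orbitResidual V (x + (ε : ℂ) • z) (y + (ε : ℂ)⁻¹ • ∑ v ∈ F, r v • wordOp V v z) = _ :=
      funext fun w => orbitResidual_update F hε w
    rw [this]
    refine (sqSum_add_le _ _).trans ?_
    refine (add_le_add (mul_le_mul_right (sqSum_add_le _ _) _)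
      (mul_le_mul_right (sqSum_add_le _ _) _)).trans ?_
    simp only [sqSum_const_mul]
    rw [← ha, ← hb]
    have hzy' : sqSum (fun w => ⟪wordOp V w z, y⟫) ≤ δ := hzy
    calc _ ≤ 2 * (2 * (η / 16) + 2 * (a * δ)) + 2 * (2 * (b * (K₁ * δ)) + 2 * (1 * (K₁ * δ))) := by
          gcongr
          · exact le_of_eq_of_le (by congr!) hF
          · simp
      _ = 4 * (η / 16) + 4 * (δ * (a + b * K₁ + K₁)) := by ring
      _ ≤ 4 * (η / 16) + 4 * (η / 16) := by gcongr
      _ ≤ 4 * (η / 16) + 4 * (η / 16) + 8 * (η / 16) := le_self_add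
      _ = 16 * (η / 16) := by ring
      _ = η := ENNReal.mul_div_cancel (by simp) (by simp)
  · rw [add_sub_cancel_left, norm_smul, hz1, hnε, mul_one]
  · have h1 : ‖∑ v ∈ F, r v • wordOp V v z‖ₑ ^ 2 ≤ 5 * (ε : ℝ≥0∞) ^ 4 := by
      refine (enorm_combination_sq_le F r z).trans ?_
      calc _ ≤ 3 * (ε : ℝ≥0∞) ^ 4 + 2 * (ε : ℝ≥0∞) ^ 4 := by
            gcongr
            exact herr.trans hle'
        _ = _ := by ring
    have h2 : ‖∑ v ∈ F, r v • wordOp V v z‖ ^ 2 ≤ 5 * (ε : ℝ) ^ 4 := by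
      rw [enorm_eq_nnnorm] at h1
      exact_mod_cast h1
    have h3 : ‖∑ v ∈ F, r v • wordOp V v z‖ ≤ 3 * (ε : ℝ) ^ 2 := by
      refine le_of_sq_le_sq ?_ (by positivity)
      nlinarith [pow_nonneg ε.coe_nonneg 4]
    have hε0 : (0 : ℝ) < ε := hε
    rw [add_sub_cancel_left, norm_smul, norm_inv, hnε]
    calc (ε : ℝ)⁻¹ * _ ≤ (ε : ℝ)⁻¹ * (3 * (ε : ℝ) ^ 2) := by gcongr
      _ = 3 * ε := by field_simp

/-- A Cuntz row-isometry with dense absolutely continuous vectors has a wandering vector. -/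
theorem IsCuntzRow.exists_isWandering_of_dense (hV : IsCuntzRow V) [Nontrivial E] [Nontrivial ι]
    (hdense : Dense (acSubmodule V : Set E)) : ∃ ζ, IsWandering V ζ := by
  let P : ℕ → E × E → Prop := fun j p =>
    IsAC V p.1 ∧ sqSum (orbitResidual V p.1 p.2) ≤ (((1 / 2 : ℝ≥0) ^ j : ℝ≥0) : ℝ≥0∞) ^ 4
  have hstep : ∀ j p, P j p → ∃ p', P (j + 1) p' ∧ ‖p'.1 - p.1‖ ≤ (1 / 2 : ℝ) ^ j ∧
      ‖p'.2 - p.2‖ ≤ 3 * (1 / 2 : ℝ) ^ j := by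
    rintro j ⟨x, y⟩ ⟨h1, h2⟩
    have hpos : ∀ k, (0 : ℝ≥0) < (1 / 2) ^ k := fun k => by positivity
    obtain ⟨x', y', h3, h4, h5, h6⟩ := hV.exists_residual_le hdense h1 (hpos j) h2
      (η := (((1 / 2 : ℝ≥0) ^ (j + 1) : ℝ≥0) : ℝ≥0∞) ^ 4)
      (ENNReal.pow_pos (ENNReal.coe_pos.2 (hpos (j + 1))) 4)
    exact ⟨(x', y'), ⟨h3, h4⟩, by simpa using h5, by simpa using h6⟩
  have h0 : P 0 (0, 0) := by
    refine ⟨IsAC.zero, ?_⟩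
    rw [sqSum, tsum_eq_single []]
    · simp [orbitResidual]
    · intro w hw
      simp [orbitResidual, hw]
  choose! nxt hnP hn1 hn2 using hstep
  let u : ℕ → E × E := fun j => Nat.rec (0, 0) nxt j
  have hu : ∀ j, u (j + 1) = nxt j (u j) := fun j => rfl
  have huP : ∀ j, P j (u j) := by
    intro j
    induction j with
    | zero => exact h0
    | succ j ih => rw [hu]; exact hnP j _ ih
  obtain ⟨x, hx⟩ := cauchySeq_tendsto_of_complete (cauchySeq_of_le_geometric (1 / 2 : ℝ) 1
    (by norm_num) (f := fun j => (u j).1) fun j => by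
      rw [dist_comm, dist_eq_norm, one_mul, hu]; exact hn1 j _ (huP j))
  obtain ⟨y, hy⟩ := cauchySeq_tendsto_of_complete (cauchySeq_of_le_geometric (1 / 2 : ℝ) 3
    (by norm_num) (f := fun j => (u j).2) fun j => by
      rw [dist_comm, dist_eq_norm, hu]; exact hn2 j _ (huP j))
  have hres : ∀ w, orbitResidual V x y w = 0 := by
    intro w
    have ht : Filter.Tendsto (fun j => ‖orbitResidual V (u j).1 (u j).2 w‖ₑ ^ 2) Filter.atTop
        (nhds (‖orbitResidual V x y w‖ₑ ^ 2)) := by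
      refine ((ENNReal.continuous_pow 2).tendsto _).comp ((continuous_enorm.tendsto _).comp ?_)
      exact tendsto_const_nhds.sub
        (Filter.Tendsto.inner (((wordOp V w).continuous.tendsto _).comp hx) hy)
    have h2 : Filter.Tendsto (fun j : ℕ => (((1 / 2 : ℝ≥0) ^ j : ℝ≥0) : ℝ≥0∞) ^ 4) Filter.atTop
        (nhds 0) := by
      have h3 : Filter.Tendsto (fun j : ℕ => (1 / 2 : ℝ≥0) ^ j) Filter.atTop (nhds 0) :=
        NNReal.tendsto_pow_atTop_nhds_zero_of_lt_one (NNReal.half_lt_self one_ne_zero)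
      have h4 := ((ENNReal.continuous_pow 4).tendsto _).comp (ENNReal.tendsto_coe.2 h3)
      simpa [Function.comp_def] using h4
    have hle := le_of_tendsto_of_tendsto' ht h2 fun j =>
      (ENNReal.le_tsum (f := fun w => ‖orbitResidual V (u j).1 (u j).2 w‖ₑ ^ 2) w).trans (huP j).2
    simpa using hle
  refine hV.iso.exists_isWandering (x := x) (y := y) (fun w hw => ?_) ?_
  · simpa [orbitResidual, hw] using hres w
  · have := hres []
    rw [orbitResidual, if_pos rfl, sub_eq_zero] at this
    simpa using this.symm.trans_ne one_ne_zero

end ExistsWandering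

section WanderingSpan

variable {E ι : Type*} [NormedAddCommGroup E] [InnerProductSpace ℂ E] {V : ι → E →L[ℂ] E}

theorem map_mem_closure_span (A : E →L[ℂ] E) {s t : Set E} (h : ∀ x ∈ s, A x ∈ t) {x : E}
    (hx : x ∈ (Submodule.span ℂ s).topologicalClosure) :
    A x ∈ (Submodule.span ℂ t).topologicalClosure := by
  refine map_mem_closure A.continuous hx fun z hz => ?_
  have : Submodule.span ℂ s ≤ (Submodule.span ℂ t).comap (A : E →ₗ[ℂ] E) :=
    Submodule.span_le.2 fun y hy => Submodule.subset_span (h y hy)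
  exact this hz

theorem norm_inner_sum_sq_le {α : Type*} (F : Finset α) (c : α → ℂ) (e : α → E) (z : E) :
    ‖⟪∑ w ∈ F, c w • e w, z⟫‖ ^ 2 ≤ (∑ w ∈ F, ‖c w‖ ^ 2) * ∑ w ∈ F, ‖⟪e w, z⟫‖ ^ 2 := by
  refine le_trans ?_ (Finset.sum_mul_sq_le_sq_mul_sq F (fun w => ‖c w‖) fun w => ‖⟪e w, z⟫‖)
  gcongr
  rw [sum_inner]
  refine (norm_sum_le _ _).trans (le_of_eq (Finset.sum_congr rfl fun w _ => ?_))
  simp [inner_smul_left]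

theorem sum_norm_sq_le_of_enorm {α : Type*} (F : Finset α) (f : α → ℂ) {t : ℝ≥0}
    (h : ∑ w ∈ F, ‖f w‖ₑ ^ 2 ≤ t) : ∑ w ∈ F, ‖f w‖ ^ 2 ≤ t := by
  simp only [enorm_eq_nnnorm] at h
  have : ∑ w ∈ F, ‖f w‖₊ ^ 2 ≤ t := by exact_mod_cast h
  simpa using NNReal.coe_le_coe.2 this

theorem IsWandering.sum_norm_sq_le {ζ a : E} (hζ : IsWandering V ζ)
    (ha : ∀ y, orbitSum V a y ≤ (1 / 4 : ℝ≥0) * ‖y‖ₑ ^ 2) (F : Finset (List ι)) (c : List ι → ℂ) :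
    ∑ w ∈ F, ‖c w‖ ^ 2 ≤ 4 * ‖∑ w ∈ F, c w • wordOp V w (ζ + a)‖ ^ 2 := by
  set o := ∑ w ∈ F, c w • wordOp V w ζ with ho
  set q := ∑ w ∈ F, c w • wordOp V w a with hq
  set s := ∑ w ∈ F, ‖c w‖ ^ 2 with hs
  have horth : Orthonormal ℂ fun w => wordOp V w ζ := orthonormal_iff_ite.2 hζ.2
  have h1 : ‖o‖ ^ 2 = s := by
    have h := horth.inner_sum c c F
    rw [← ho, inner_self_eq_norm_sq_to_K] at h
    have h2 : ∀ w, starRingEnd ℂ (c w) * c w = ((‖c w‖ ^ 2 : ℝ) : ℂ) := fun w => by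
      rw [mul_comm, Complex.mul_conj']; norm_cast
    simp only [h2] at h
    exact Complex.ofReal_injective (by simpa [hs] using h)
  have h2 : ∑ w ∈ F, ‖⟪wordOp V w a, q⟫‖ ^ 2 ≤ 1 / 4 * ‖q‖ ^ 2 := by
    have := sum_norm_sq_le_of_enorm F (fun w => ⟪wordOp V w a, q⟫) (t := 1 / 4 * ‖q‖₊ ^ 2) <| by
      refine (sum_enorm_sq_le_sqSum _ F).trans ((ha q).trans ?_)
      rw [enorm_eq_nnnorm]
      push_cast
      exact le_rfl
    simpa using this
  have h3 := norm_inner_sum_sq_le F c (fun w => wordOp V w a) q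
  rw [← hq, ← hs, inner_self_eq_norm_sq_to_K] at h3
  have h4 : ‖q‖ ^ 2 * ‖q‖ ^ 2 ≤ s * (1 / 4 * ‖q‖ ^ 2) := by
    have h5 : ‖((‖q‖ : ℂ)) ^ 2‖ ^ 2 = ‖q‖ ^ 2 * ‖q‖ ^ 2 := by simp; ring
    rw [← h5]
    exact h3.trans (mul_le_mul_of_nonneg_left h2 (by positivity))
  have h5 : ‖q‖ ^ 2 ≤ s / 4 := by
    rcases eq_or_lt_of_le (sq_nonneg ‖q‖) with h | h
    · rw [← h]; positivity
    · nlinarith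
  have h6 : ‖q‖ ≤ ‖o‖ / 2 := by
    refine le_of_sq_le_sq ?_ (by positivity)
    nlinarith
  have h7 : ‖o‖ / 2 ≤ ‖o + q‖ := by
    have := norm_sub_le (o + q) q
    rw [add_sub_cancel_right] at this
    linarith
  have h8 : ∑ w ∈ F, c w • wordOp V w (ζ + a) = o + q := by
    simp [ho, hq, Finset.sum_add_distrib]
  rw [h8, ← h1]
  nlinarith [norm_nonneg o, norm_nonneg (o + q)]

theorem IsWandering.norm_inner_sq_le_of_mem_span {ζ a : E} (hζ : IsWandering V ζ)
    (ha : ∀ y, orbitSum V a y ≤ (1 / 4 : ℝ≥0) * ‖y‖ₑ ^ 2) {d : ℕ} {z : E} {t : ℝ≥0}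
    (ht : orbitTail V d (ζ + a) z ≤ t) {p : E}
    (hp : p ∈ (Submodule.span ℂ
      ((fun w => wordOp V w (ζ + a)) '' {w | d ≤ w.length})).topologicalClosure) :
    ‖⟪p, z⟫‖ ^ 2 ≤ 4 * ‖p‖ ^ 2 * t := by
  have hcl : IsClosed {p : E | ‖⟪p, z⟫‖ ^ 2 ≤ 4 * ‖p‖ ^ 2 * t} :=
    isClosed_le (by fun_prop) (by fun_prop)
  refine closure_minimal (fun p hp => ?_) hcl hp
  obtain ⟨l, hl, rfl⟩ := (Finsupp.mem_span_image_iff_linearCombination ℂ).1 hp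
  rw [Set.mem_ofPred_eq, Finsupp.linearCombination_apply, Finsupp.sum]
  refine (norm_inner_sum_sq_le l.support l _ z).trans ?_
  gcongr
  · exact hζ.sum_norm_sq_le ha _ _
  · refine sum_norm_sq_le_of_enorm _ _ (le_trans ?_ ht)
    refine le_trans (le_of_eq ?_) (ENNReal.sum_le_tsum l.support)
    refine Finset.sum_congr rfl fun w hw => ?_
    exact (if_pos (show d ≤ w.length from (Finsupp.mem_supported ℂ l).1 hl hw)).symm

variable [CompleteSpace E] [Fintype ι]

theorem IsCuntzRow.reducingCore_closure_orbit_eq_bot (hV : IsCuntzRow V) {ζ a : E}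
    (hζ : IsWandering V ζ) (ha : ∀ y, orbitSum V a y ≤ (1 / 4 : ℝ≥0) * ‖y‖ₑ ^ 2) :
    reducingCore V
      (Submodule.span ℂ (Set.range fun w => wordOp V w (ζ + a))).topologicalClosure = ⊥ := by
  set b := ζ + a with hb
  set L := (Submodule.span ℂ (Set.range fun w => wordOp V w b)).topologicalClosure with hL
  let T : ℕ → Submodule ℂ E := fun d =>
    (Submodule.span ℂ ((fun w => wordOp V w b) '' {w | d ≤ w.length})).topologicalClosure
  have hmap : ∀ d i, ∀ x ∈ T d, V i x ∈ T (d + 1) := by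
    intro d i x hx
    refine map_mem_closure_span (V i) ?_ hx
    rintro _ ⟨w, hw, rfl⟩
    refine ⟨i :: w, ?_, wordOp_cons_apply _ _ _ _⟩
    simpa using hw
  have hcore : ∀ d, ∀ y ∈ reducingCore V L, y ∈ T d := by
    intro d
    induction d with
    | zero =>
      intro y hy
      have : T 0 = L := by simp [T, hL]
      rw [this]
      exact reducingCore_le hy
    | succ d ih =>
      intro y hy
      rw [← hV.sum_star y]
      exact Submodule.sum_mem _ fun i _ => hmap d i _ (ih _ (star_mem_reducingCore i hy))
  have haAC : IsAC V a := ⟨1 / 4, ha⟩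
  refine (Submodule.eq_bot_iff _).2 fun y hy => ?_
  refine ext_inner_right ℂ fun z => ?_
  rw [inner_zero_left]
  by_contra hne
  have hpos : 0 < ‖⟪y, z⟫‖ ^ 2 := by positivity
  have hy0 : 0 < 4 * ‖y‖ ^ 2 + 1 := by positivity
  let t : ℝ≥0 := ⟨‖⟪y, z⟫‖ ^ 2 / (4 * ‖y‖ ^ 2 + 1), by positivity⟩
  have ht : 0 < t := div_pos hpos hy0
  obtain ⟨d, hd⟩ := exists_orbitTail_le ((hζ.isAC.add haAC).orbitSum_ne_top z)
    (ENNReal.coe_pos.2 ht)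
  have := hζ.norm_inner_sq_le_of_mem_span ha hd (hcore d y hy)
  have h2 : (4 * ‖y‖ ^ 2 + 1) * (t : ℝ) = ‖⟪y, z⟫‖ ^ 2 := mul_div_cancel₀ _ hy0.ne'
  have h3 : (0 : ℝ) < t := ht
  nlinarith

/-- Once one wandering vector exists, wandering vectors span all absolutely continuous ones. -/
theorem IsCuntzRow.isAC_mem_closure_span_wandering (hV : IsCuntzRow V) {ζ a : E}
    (hζ : IsWandering V ζ) (ha : IsAC V a) :
    a ∈ (Submodule.span ℂ {ζ : E | IsWandering V ζ}).topologicalClosure := by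
  obtain ⟨C, hC⟩ := ha
  set c : ℝ≥0 := (2 * (C + 1))⁻¹ with hc
  have hc0 : (c : ℂ) ≠ 0 := by
    have : c ≠ 0 := by positivity
    exact_mod_cast this
  have hcC : c ^ 2 * C ≤ 1 / 4 := by
    rw [← NNReal.coe_le_coe]
    have h0 : (0 : ℝ) ≤ C := C.coe_nonneg
    have : ((c ^ 2 * C : ℝ≥0) : ℝ) = C / (2 * (C + 1)) ^ 2 := by
      rw [hc]; push_cast; field_simp
    rw [this, div_le_iff₀ (by positivity)]
    push_cast
    nlinarith
  have ha' : ∀ y, orbitSum V ((c : ℂ) • a) y ≤ (1 / 4 : ℝ≥0) * ‖y‖ₑ ^ 2 := by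
    intro y
    rw [orbitSum_smul_left]
    calc _ ≤ ‖(c : ℂ)‖ₑ ^ 2 * (C * ‖y‖ₑ ^ 2) := by gcongr; exact hC y
      _ = ((c ^ 2 * C : ℝ≥0) : ℝ≥0∞) * ‖y‖ₑ ^ 2 := by
        rw [enorm_eq_nnnorm, show ‖(c : ℂ)‖₊ = c by ext; simp]
        push_cast; ring
      _ ≤ _ := by gcongr
  set W := (Submodule.span ℂ {ζ : E | IsWandering V ζ}).topologicalClosure with hW
  have hsub : ∀ ζ, IsWandering V ζ → ζ ∈ W := fun ζ h =>
    Submodule.le_topologicalClosure _ (Submodule.subset_span h)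
  set b := ζ + (c : ℂ) • a with hb
  set L := (Submodule.span ℂ (Set.range fun w => wordOp V w b)).topologicalClosure with hL
  have hinv : ∀ i, ∀ x ∈ L, V i x ∈ L := fun i x hx => by
    refine map_mem_closure_span (V i) ?_ hx
    rintro _ ⟨w, rfl⟩
    exact ⟨i :: w, wordOp_cons_apply _ _ _ _⟩
  have hLW := hV.eq_closure_span_wandering (Submodule.isClosed_topologicalClosure _) hinv
    (hV.reducingCore_closure_orbit_eq_bot hζ ha')
  have hbL : b ∈ L := Submodule.le_topologicalClosure _ (Submodule.subset_span ⟨[], by simp⟩)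
  have hbW : b ∈ W := Submodule.topologicalClosure_mono (Submodule.span_mono fun ζ h => h.2)
    (hLW.le hbL)
  have hcaW : (c : ℂ) • a ∈ W := by
    have := W.sub_mem hbW (hsub ζ hζ)
    rwa [hb, add_sub_cancel_left] at this
  have := W.smul_mem (c : ℂ)⁻¹ hcaW
  rwa [smul_smul, inv_mul_cancel₀ hc0, one_smul] at this

end WanderingSpan

section Restriction

variable {E ι : Type*} [NormedAddCommGroup E] [InnerProductSpace ℂ E] {V : ι → E →L[ℂ] E}
  {M : Submodule ℂ E}

/-- The restriction of a tuple of operators to a subspace. -/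
def rowRestrict (V : ι → E →L[ℂ] E) (M : Submodule ℂ E) (i : ι) : M →L[ℂ] M :=
  restrictCLM (V i) M

theorem coe_rowRestrict_apply (hM : ∀ i, ∀ x ∈ M, V i x ∈ M) (i : ι) (x : M) :
    (rowRestrict V M i x : E) = V i x := by
  rw [rowRestrict, restrictCLM, dif_pos (hM i)]
  rfl

theorem coe_wordOp_rowRestrict_apply (hM : ∀ i, ∀ x ∈ M, V i x ∈ M) (w : List ι) (x : M) :
    (wordOp (rowRestrict V M) w x : E) = wordOp V w x := by
  induction w with
  | nil => rfl
  | cons i w ih => rw [wordOp_cons_apply, wordOp_cons_apply, coe_rowRestrict_apply hM, ih]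

theorem isWandering_rowRestrict_iff (hM : ∀ i, ∀ x ∈ M, V i x ∈ M) {ζ : M} :
    IsWandering (rowRestrict V M) ζ ↔ IsWandering V (ζ : E) := by
  simp only [IsWandering, Submodule.coe_inner, coe_wordOp_rowRestrict_apply hM, Submodule.coe_norm]

theorem orbitSum_rowRestrict (hM : ∀ i, ∀ x ∈ M, V i x ∈ M) (x y : M) :
    orbitSum (rowRestrict V M) x y = orbitSum V (x : E) y := by
  simp only [orbitSum, Submodule.coe_inner, coe_wordOp_rowRestrict_apply hM]

theorem IsRowIsometry.restrict (hV : IsRowIsometry V) (hM : ∀ i, ∀ x ∈ M, V i x ∈ M) :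
    IsRowIsometry (rowRestrict V M) := fun i j x y => by
  simp only [Submodule.coe_inner, coe_rowRestrict_apply hM]
  exact hV i j x y

theorem isSelfAdjointRow_rowRestrict_iff :
    IsSelfAdjointRow (rowRestrict V M) ↔ restrictedAlgSelfAdjoint V M := Iff.rfl

variable [CompleteSpace M]

theorem IsAC.of_rowRestrict (hM : ∀ i, ∀ x ∈ M, V i x ∈ M) {x : M}
    (hx : IsAC (rowRestrict V M) x) : IsAC V (x : E) := by
  obtain ⟨C, hC⟩ := hx
  refine ⟨C, fun y => ?_⟩
  have h : orbitSum V (x : E) y = orbitSum (rowRestrict V M) x (M.orthogonalProjectionOnto y) := by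
    rw [orbitSum_rowRestrict hM, orbitSum, orbitSum]
    congr 1
    ext w
    have := wordOp_mem hM w x.2
    exact (Submodule.inner_orthogonalProjectionOnto_eq_of_mem_left ⟨_, this⟩ y).symm
  rw [h]
  refine (hC _).trans ?_
  gcongr
  exact enorm_le_iff_norm_le.2 (M.norm_orthogonalProjectionOnto_apply_le y)

variable [CompleteSpace E]

theorem coe_star_rowRestrict_apply (hM : ∀ i, ∀ x ∈ M, V i x ∈ M)
    (hM' : ∀ i, ∀ x ∈ M, star (V i) x ∈ M) (i : ι) (x : M) :
    (star (rowRestrict V M i) x : E) = star (V i) x := by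
  have : star (rowRestrict V M i) x = ⟨star (V i) x, hM' i x x.2⟩ := by
    refine ext_inner_right ℂ fun y => ?_
    rw [inner_star_left]
    simp only [Submodule.coe_inner, coe_rowRestrict_apply hM]
    rw [inner_star_left]
  rw [this]

theorem IsAC.orthogonalProjectionOnto (hM : ∀ i, ∀ x ∈ M, V i x ∈ M)
    (hM' : ∀ i, ∀ x ∈ M, star (V i) x ∈ M) {x : E} (hx : IsAC V x) :
    IsAC (rowRestrict V M) (M.orthogonalProjectionOnto x) := by
  obtain ⟨C, hC⟩ := hx
  refine ⟨C, fun y => le_of_eq_of_le ?_ (hC y)⟩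
  rw [orbitSum_rowRestrict hM, orbitSum, orbitSum]
  congr 1
  ext w
  have := star_wordOp_mem hM' w y.2
  rw [← inner_star_right, ← inner_star_right]
  exact Submodule.inner_orthogonalProjectionOnto_eq_of_mem_right ⟨_, this⟩ x

theorem IsCuntzRow.restrict [Fintype ι] (hV : IsCuntzRow V) (hM : ∀ i, ∀ x ∈ M, V i x ∈ M)
    (hM' : ∀ i, ∀ x ∈ M, star (V i) x ∈ M) : IsCuntzRow (rowRestrict V M) := by
  refine ⟨hV.iso.restrict hM, fun x => ?_⟩
  ext
  rw [Submodule.coe_sum]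
  simp only [coe_rowRestrict_apply hM, coe_star_rowRestrict_apply hM hM', hV.sum_star]

end Restriction

section AbsolutelyContinuous

variable {E ι : Type*} [NormedAddCommGroup E] [InnerProductSpace ℂ E] {V : ι → E →L[ℂ] E}

/-- The closure of the absolutely continuous vectors. -/
def acClosure (V : ι → E →L[ℂ] E) : Submodule ℂ E := (acSubmodule V).topologicalClosure

theorem isClosed_acClosure : IsClosed (acClosure V : Set E) :=
  Submodule.isClosed_topologicalClosure _

theorem IsAC.mem_acClosure {x : E} (hx : IsAC V x) : x ∈ acClosure V :=
  Submodule.le_topologicalClosure _ hx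

theorem map_mem_acClosure_of {A : E →L[ℂ] E} (hA : ∀ x, IsAC V x → IsAC V (A x)) {x : E}
    (hx : x ∈ acClosure V) : A x ∈ acClosure V :=
  map_mem_closure A.continuous hx hA

theorem map_mem_acClosure (i : ι) : ∀ x ∈ acClosure V, V i x ∈ acClosure V := fun _ hx =>
  map_mem_acClosure_of (fun _ h => h.map i) hx

variable [CompleteSpace E] [Fintype ι]

theorem IsCuntzRow.dense_acSubmodule_core (hV : IsCuntzRow V) :
    Dense (acSubmodule (rowRestrict V (reducingCore V (acClosure V))) :
      Set (reducingCore V (acClosure V))) := by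
  set K := reducingCore V (acClosure V) with hK
  have : CompleteSpace K := (isClosed_reducingCore isClosed_acClosure).completeSpace_coe
  intro y
  have hy : (y : E) ∈ closure (acSubmodule V : Set E) := reducingCore_le y.2
  have h := map_mem_closure K.orthogonalProjectionOnto.continuous hy
    (t := acSubmodule (rowRestrict V K)) fun a ha =>
      ha.orthogonalProjectionOnto (fun i _ => map_mem_reducingCore hV.iso map_mem_acClosure i)
        fun i _ => star_mem_reducingCore i
  rwa [Submodule.orthogonalProjectionOnto_mem_subspace_eq_self] at h

variable [Nontrivial ι]

theorem IsCuntzRow.core_eq_closure_span_wandering (hV : IsCuntzRow V)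
    (hne : reducingCore V (acClosure V) ≠ ⊥) :
    reducingCore V (acClosure V) = (Submodule.span ℂ
      {ζ : E | ζ ∈ reducingCore V (acClosure V) ∧ IsWandering V ζ}).topologicalClosure ∧
      ∃ ζ, IsWandering V ζ := by
  have hdense := hV.dense_acSubmodule_core
  have hcl := isClosed_reducingCore (V := V) (isClosed_acClosure (V := V))
  have hmap : ∀ i, ∀ x ∈ reducingCore V (acClosure V), V i x ∈ reducingCore V (acClosure V) :=
    fun i _ => map_mem_reducingCore hV.iso map_mem_acClosure i
  have hstar : ∀ i, ∀ x ∈ reducingCore V (acClosure V),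
      star (V i) x ∈ reducingCore V (acClosure V) := fun i _ => star_mem_reducingCore i
  generalize reducingCore V (acClosure V) = K at *
  have : CompleteSpace K := hcl.completeSpace_coe
  have : Nontrivial K := Submodule.nontrivial_iff_ne_bot.2 hne
  have hR := hV.restrict hmap hstar
  obtain ⟨ζ, hζ⟩ := hR.exists_isWandering_of_dense hdense
  refine ⟨le_antisymm (fun y hy => ?_)
    (Submodule.topologicalClosure_minimal _ (Submodule.span_le.2 fun ζ hζ => hζ.1) hcl),
    ζ, (isWandering_rowRestrict_iff hmap).1 hζ⟩
  set W := (Submodule.span ℂ {ζ : K | IsWandering (rowRestrict V K) ζ}).topologicalClosure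
  have hW : (⟨y, hy⟩ : K) ∈ W :=
    closure_minimal (fun a ha => hR.isAC_mem_closure_span_wandering hζ ha)
      (Submodule.isClosed_topologicalClosure _) (hdense ⟨y, hy⟩)
  refine map_mem_closure continuous_subtype_val hW fun z hz => ?_
  have : Submodule.span ℂ {ζ : K | IsWandering (rowRestrict V K) ζ} ≤
      (Submodule.span ℂ {ζ : E | ζ ∈ K ∧ IsWandering V ζ}).comap K.subtype :=
    Submodule.span_le.2 fun ζ hζ =>
      Submodule.subset_span ⟨ζ.2, (isWandering_rowRestrict_iff hmap).1 hζ⟩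
  exact this hz

/-- A Cuntz row-isometry with a nonzero absolutely continuous vector has a wandering vector. -/
theorem IsCuntzRow.exists_isWandering (hV : IsCuntzRow V) {x : E} (hx : IsAC V x) (hx0 : x ≠ 0) :
    ∃ ζ, IsWandering V ζ := by
  by_cases hK : reducingCore V (acClosure V) = ⊥
  · have h := hV.eq_closure_span_wandering isClosed_acClosure map_mem_acClosure hK
    by_contra hn
    push Not at hn
    have hx' := hx.mem_acClosure
    rw [h] at hx'
    simp [hn] at hx'
    exact hx0 hx'
  · exact (hV.core_eq_closure_span_wandering hK).2

end AbsolutelyContinuous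

section CommutingRows

variable {E ι ι' κ : Type*} [NormedAddCommGroup E] [InnerProductSpace ℂ E] [Fintype ι]
  [Fintype ι'] [Fintype κ]

/-- Two tuples commute up to a permutation of the pairs of indices. -/
def RowsCommute (V : ι → E →L[ℂ] E) (W : κ → E →L[ℂ] E) : Prop :=
  ∀ g : (E →L[ℂ] E) → ℝ≥0∞, ∑ i, ∑ j, g (V i * W j) = ∑ i, ∑ j, g (W j * V i)

theorem RowsCommute.symm {V : ι → E →L[ℂ] E} {W : κ → E →L[ℂ] E} (h : RowsCommute V W) :
    RowsCommute W V := fun g => by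
  rw [Finset.sum_comm, ← h g, Finset.sum_comm]

theorem RowsCommute.refl (V : ι → E →L[ℂ] E) : RowsCommute V V := fun _ => Finset.sum_comm

theorem RowsCommute.mul {V : ι → E →L[ℂ] E} {V' : ι' → E →L[ℂ] E} {W : κ → E →L[ℂ] E}
    (h : RowsCommute V W) (h' : RowsCommute V' W) :
    RowsCommute (fun r : ι × ι' => V r.1 * V' r.2) W := fun g => by
  rw [Fintype.sum_prod_type, Fintype.sum_prod_type]
  calc ∑ i, ∑ i', ∑ j, g (V i * V' i' * W j)
      = ∑ i, ∑ i', ∑ j, g (V i * W j * V' i') := by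
        refine Finset.sum_congr rfl fun i _ => ?_
        simpa only [mul_assoc] using h' fun X => g (V i * X)
    _ = ∑ i', ∑ i, ∑ j, g (V i * W j * V' i') := Finset.sum_comm
    _ = ∑ i', ∑ i, ∑ j, g (W j * V i * V' i') :=
        Finset.sum_congr rfl fun i' _ => h fun X => g (X * V' i')
    _ = ∑ i, ∑ i', ∑ j, g (W j * V i * V' i') := Finset.sum_comm
    _ = _ := by simp only [mul_assoc]

omit [Fintype ι] in
theorem fnWordOp_zero (V : ι → E →L[ℂ] E) (u : Fin 0 → ι) : fnWordOp V u = 1 := rfl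

omit [Fintype ι] in
theorem fnWordOp_cons {d : ℕ} (V : ι → E →L[ℂ] E) (i : ι) (u : Fin d → ι) :
    fnWordOp V (Fin.cons i u : Fin (d + 1) → ι) = V i * fnWordOp V u := by
  simp [fnWordOp, List.ofFn_succ, wordOp_cons]

theorem sum_fnWordOp_succ {R : Type*} [AddCommMonoid R] {d : ℕ} (V : ι → E →L[ℂ] E)
    (g : (E →L[ℂ] E) → R) :
    ∑ u : Fin (d + 1) → ι, g (fnWordOp V u) = ∑ r : ι × (Fin d → ι), g (V r.1 * fnWordOp V r.2) :=
  (Fintype.sum_equiv (Fin.consEquiv fun _ => ι) _ _ fun r => by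
    rw [← fnWordOp_cons]; rfl).symm

theorem RowsCommute.words {V : ι → E →L[ℂ] E} {W : κ → E →L[ℂ] E} (h : RowsCommute V W)
    (d : ℕ) : RowsCommute (fun u : Fin d → ι => fnWordOp V u) W := by
  induction d with
  | zero => intro g; simp [fnWordOp_zero]
  | succ d ih =>
    intro g
    rw [sum_fnWordOp_succ V fun X => ∑ j, g (X * W j), h.mul ih g,
      sum_fnWordOp_succ V fun X => ∑ j, g (W j * X)]

theorem orbitSum_eq_tsum_length (V : ι → E →L[ℂ] E) (x y : E) :
    orbitSum V x y = ∑' d, ∑ u : Fin d → ι, ‖⟪fnWordOp V u x, y⟫‖ₑ ^ 2 := by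
  rw [orbitSum, sqSum, ← List.equivSigmaTuple.symm.tsum_eq, ENNReal.tsum_sigma']
  refine tsum_congr fun d => ?_
  rw [tsum_fintype]
  rfl

variable [CompleteSpace E]

theorem IsAC.map_of_rowsCommute {V : ι → E →L[ℂ] E} {W : κ → E →L[ℂ] E} (h : RowsCommute V W)
    (hW : IsCuntzRow W) {x : E} (hx : IsAC V x) (j : κ) : IsAC V (W j x) := by
  obtain ⟨C, hC⟩ := hx
  refine ⟨C, fun y => ?_⟩
  have key : ∑ j, orbitSum V (W j x) y = ∑ j, orbitSum V x (star (W j) y) := by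
    simp only [orbitSum_eq_tsum_length, inner_star_right]
    rw [← Summable.tsum_finsetSum fun _ _ => ENNReal.summable,
      ← Summable.tsum_finsetSum fun _ _ => ENNReal.summable]
    refine tsum_congr fun d => ?_
    rw [Finset.sum_comm]
    refine ((h.words d) fun X => ‖⟪X x, y⟫‖ₑ ^ 2).trans ?_
    rw [Finset.sum_comm]
    rfl
  calc orbitSum V (W j x) y ≤ ∑ j, orbitSum V (W j x) y :=
        Finset.single_le_sum (f := fun j => orbitSum V (W j x) y) (fun _ _ => zero_le)
          (Finset.mem_univ j)
    _ = ∑ j, orbitSum V x (star (W j) y) := key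
    _ ≤ ∑ j, C * ‖star (W j) y‖ₑ ^ 2 := Finset.sum_le_sum fun j _ => hC _
    _ = C * ‖y‖ₑ ^ 2 := by rw [← Finset.mul_sum, hW.sum_enorm_star]

theorem IsCuntzRow.mul {V : ι → E →L[ℂ] E} {W : κ → E →L[ℂ] E} (hV : IsCuntzRow V)
    (hW : IsCuntzRow W) : IsCuntzRow fun r : ι × κ => V r.1 * W r.2 := by
  refine ⟨fun r s x y => ?_, fun x => ?_⟩
  · rw [mul_apply_eq_comp, mul_apply_eq_comp, hV.iso, hW.iso, Prod.ext_iff]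
    split_ifs <;> simp_all
  · rw [Fintype.sum_prod_type]
    have h : ∀ i, ∑ j, (V i * W j) (star (V i * W j) x) = V i (star (V i) x) := fun i => by
      conv_rhs => rw [← hW.sum_star (star (V i) x), map_sum]
      refine Finset.sum_congr rfl fun j _ => ?_
      rw [star_mul]
      rfl
    simp only [h, hV.sum_star]

theorem IsCuntzRow.words {V : ι → E →L[ℂ] E} (hV : IsCuntzRow V) (d : ℕ) :
    IsCuntzRow fun u : Fin d → ι => fnWordOp V u := by
  induction d with
  | zero =>
    exact ⟨fun u v x y => by simp [fnWordOp_zero, Subsingleton.elim u v],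
      fun x => by simp [fnWordOp_zero]⟩
  | succ d ih =>
    have h := hV.mul ih
    refine ⟨fun u v x y => ?_, fun x => ?_⟩
    · have := h.iso (u 0, Fin.tail u) (v 0, Fin.tail v) x y
      simp only [← fnWordOp_cons, Fin.cons_self_tail] at this
      rw [this]
      congr 1
      rw [Prod.mk.injEq, ← Fin.cons_inj (α := fun _ => ι), Fin.cons_self_tail, Fin.cons_self_tail]
    · rw [sum_fnWordOp_succ V fun X => X (star X x)]
      exact h.sum_star x

end CommutingRows

section WordExchange

variable {R ι κ : Type*} [NormedAddCommGroup R] [InnerProductSpace ℂ R]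

theorem exists_wordOp_mul_wordOp {V : ι → R →L[ℂ] R} {W : κ → R →L[ℂ] R}
    (h : ∀ i j, ∃ i' j', V i * W j = W j' * V i') (u : List ι) (v : List κ) :
    ∃ (u' : List ι) (v' : List κ), u'.length = u.length ∧ v'.length = v.length ∧
      wordOp V u * wordOp W v = wordOp W v' * wordOp V u' := by
  have h1 : ∀ (u : List ι) (j : κ), ∃ (u' : List ι) (j' : κ), u'.length = u.length ∧
      wordOp V u * W j = W j' * wordOp V u' := by
    intro u
    induction u with
    | nil => exact fun j => ⟨[], j, rfl, by simp⟩
    | cons i u ih =>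
      intro j
      obtain ⟨u₁, j₁, hu₁, h₁⟩ := ih j
      obtain ⟨i', j', h₂⟩ := h i j₁
      refine ⟨i' :: u₁, j', by simp [hu₁], ?_⟩
      rw [wordOp_cons, wordOp_cons, mul_assoc, h₁, ← mul_assoc, h₂, mul_assoc]
  induction v generalizing u with
  | nil => exact ⟨u, [], rfl, rfl, by simp⟩
  | cons j v ih =>
    obtain ⟨u₁, j', hu₁, h₁⟩ := h1 u j
    obtain ⟨u', v', hu', hv', h₂⟩ := ih u₁
    refine ⟨u', j' :: v', hu'.trans hu₁, by simp [hv'], ?_⟩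
    rw [wordOp_cons, wordOp_cons, ← mul_assoc, h₁, mul_assoc, h₂, mul_assoc]

end WordExchange

namespace TwoGraphRep

variable {m n : ℕ} {θ : Equiv.Perm (Fin m × Fin n)} {H : Type*}
  [NormedAddCommGroup H] [InnerProductSpace ℂ H] [CompleteSpace H] {ρ : TwoGraphRep m n θ H}

/-- The operators `S_u T_v` with `|u| = a` and `|v| = b`. -/
def grade (ρ : TwoGraphRep m n θ H) (a b : ℕ) : Set (H →L[ℂ] H) := Set.range (ρ.rowKL a b)

theorem mem_grade_iff {a b : ℕ} {X : H →L[ℂ] H} : X ∈ ρ.grade a b ↔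
    ∃ u v, u.length = a ∧ v.length = b ∧ X = wordOp ρ.S u * wordOp ρ.T v := by
  constructor
  · rintro ⟨⟨u, v⟩, rfl⟩
    exact ⟨List.ofFn u, List.ofFn v, by simp, by simp, rfl⟩
  · rintro ⟨u, v, rfl, rfl, rfl⟩
    exact ⟨(u.get, v.get), by simp [rowKL, fnWordOp]⟩

theorem exists_T_mul_S (ρ : TwoGraphRep m n θ H) (j : Fin n) (i : Fin m) :
    ∃ j' i', ρ.T j * ρ.S i = ρ.S i' * ρ.T j' := by
  refine ⟨(θ.symm (i, j)).2, (θ.symm (i, j)).1, ?_⟩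
  rw [ρ.comm]
  simp

theorem mul_mem_grade {a b c d : ℕ} {X Y : H →L[ℂ] H} (hX : X ∈ ρ.grade a b)
    (hY : Y ∈ ρ.grade c d) : X * Y ∈ ρ.grade (a + c) (b + d) := by
  obtain ⟨u, v, rfl, rfl, rfl⟩ := mem_grade_iff.1 hX
  obtain ⟨s, t, rfl, rfl, rfl⟩ := mem_grade_iff.1 hY
  obtain ⟨v', s', hv, hs, h⟩ := exists_wordOp_mul_wordOp ρ.exists_T_mul_S v s
  refine mem_grade_iff.2 ⟨u ++ s', v' ++ t, by simp [hs], by simp [hv], ?_⟩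
  rw [mul_assoc, ← mul_assoc _ _ (wordOp ρ.T t), h, wordOp_append, wordOp_append]
  simp only [mul_assoc]

theorem exists_mul_eq_of_mem_grade {a b c d : ℕ} {X : H →L[ℂ] H}
    (hX : X ∈ ρ.grade (a + c) (b + d)) :
    ∃ Y ∈ ρ.grade a b, ∃ Z ∈ ρ.grade c d, X = Y * Z := by
  obtain ⟨u, v, hu, hv, rfl⟩ := mem_grade_iff.1 hX
  obtain ⟨s', t', hs, ht, h⟩ := exists_wordOp_mul_wordOp (V := ρ.S) (W := ρ.T)
    (fun i j => ⟨_, _, ρ.comm i j⟩) (u.drop a) (v.take b)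
  refine ⟨_, mem_grade_iff.2 ⟨u.take a, t', by simp [hu], by simp [ht, hv], rfl⟩,
    _, mem_grade_iff.2 ⟨s', v.drop b, by simp [hs, hu], by simp [hv], rfl⟩, ?_⟩
  conv_lhs => rw [← List.take_append_drop a u, ← List.take_append_drop b v]
  rw [wordOp_append, wordOp_append, mul_assoc, ← mul_assoc (wordOp ρ.S (u.drop a)), h]
  simp only [mul_assoc]

theorem one_mem_grade : (1 : H →L[ℂ] H) ∈ ρ.grade 0 0 :=
  mem_grade_iff.2 ⟨[], [], rfl, rfl, by simp⟩

theorem grade_nonempty (hm : 0 < m) (hn : 0 < n) (a b : ℕ) : (ρ.grade a b).Nonempty :=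
  ⟨_, (fun _ => ⟨0, hm⟩, fun _ => ⟨0, hn⟩), rfl⟩

theorem wordOp_rowKL_mem_grade (k l : ℕ) (w : List ((Fin k → Fin m) × (Fin l → Fin n))) :
    wordOp (ρ.rowKL k l) w ∈ ρ.grade (w.length * k) (w.length * l) := by
  induction w with
  | nil => simpa using one_mem_grade
  | cons i w ih =>
    rw [wordOp_cons]
    convert mul_mem_grade (Set.mem_range_self i) ih using 1
    simp only [List.length_cons]
    ring_nf

theorem exists_wordOp_rowKL_of_mem_grade {k l r : ℕ} {X : H →L[ℂ] H}
    (hX : X ∈ ρ.grade (r * k) (r * l)) : ∃ w, wordOp (ρ.rowKL k l) w = X := by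
  induction r generalizing X with
  | zero =>
    obtain ⟨u, v, hu, hv, rfl⟩ := mem_grade_iff.1 hX
    simp only [zero_mul, List.length_eq_zero_iff] at hu hv
    exact ⟨[], by simp [hu, hv]⟩
  | succ r ih =>
    rw [show (r + 1) * k = k + r * k by ring, show (r + 1) * l = l + r * l by ring] at hX
    obtain ⟨_, ⟨i, rfl⟩, Z, hZ, rfl⟩ := exists_mul_eq_of_mem_grade hX
    obtain ⟨w, rfl⟩ := ih hZ
    exact ⟨i :: w, wordOp_cons _ _ _⟩

/-- Every degree `(a, b)` is bounded by a multiple of `(p, q)`. -/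
theorem exists_complement {p q : ℕ} (hp : 0 < p) (hq : 0 < q) (a b : ℕ) :
    ∃ c d r, a + c = r * p ∧ b + d = r * q := by
  refine ⟨(a + b) * p - a, (a + b) * q - b, a + b, ?_, ?_⟩
  · have : a ≤ (a + b) * p := (Nat.le_add_right a b).trans (Nat.le_mul_of_pos_right _ hp)
    omega
  · have : b ≤ (a + b) * q := (Nat.le_add_left b a).trans (Nat.le_mul_of_pos_right _ hq)
    omega

theorem CuntzType.isCuntzRow_S (h : ρ.CuntzType) : IsCuntzRow ρ.S := by
  refine ⟨fun i j x y => ?_, fun x => ?_⟩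
  · rw [← inner_star_right, ← mul_apply_eq_comp, ρ.isometS]
    split_ifs <;> simp
  · simpa using congrArg (fun A : H →L[ℂ] H => A x) h.1

theorem CuntzType.isCuntzRow_T (h : ρ.CuntzType) : IsCuntzRow ρ.T := by
  refine ⟨fun i j x y => ?_, fun x => ?_⟩
  · rw [← inner_star_right, ← mul_apply_eq_comp, ρ.isometT]
    split_ifs <;> simp
  · simpa using congrArg (fun A : H →L[ℂ] H => A x) h.2

theorem CuntzType.isCuntzRow_rowKL (h : ρ.CuntzType) (k l : ℕ) : IsCuntzRow (ρ.rowKL k l) :=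
  (h.isCuntzRow_S.words k).mul (h.isCuntzRow_T.words l)

theorem rowsCommute_S_T (ρ : TwoGraphRep m n θ H) : RowsCommute ρ.S ρ.T := fun g => by
  rw [← Fintype.sum_prod_type', ← Fintype.sum_prod_type']
  simp only [ρ.comm]
  exact Equiv.sum_comp θ fun r => g (ρ.T r.2 * ρ.S r.1)

theorem rowsCommute_rowKL_S (ρ : TwoGraphRep m n θ H) (k l : ℕ) :
    RowsCommute (ρ.rowKL k l) ρ.S :=
  ((RowsCommute.refl ρ.S).words k).mul (ρ.rowsCommute_S_T.symm.words l)

theorem rowsCommute_rowKL_T (ρ : TwoGraphRep m n θ H) (k l : ℕ) :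
    RowsCommute (ρ.rowKL k l) ρ.T :=
  (ρ.rowsCommute_S_T.words k).mul ((RowsCommute.refl ρ.T).words l)

theorem CuntzType.grade_map_mem_acClosure (h : ρ.CuntzType) (k l : ℕ) {a b : ℕ}
    {X : H →L[ℂ] H} (hX : X ∈ ρ.grade a b) {x : H} (hx : x ∈ acClosure (ρ.rowKL k l)) :
    X x ∈ acClosure (ρ.rowKL k l) := by
  obtain ⟨u, v, -, -, rfl⟩ := mem_grade_iff.1 hX
  refine wordOp_mem (fun i _ hx => map_mem_acClosure_of
    (fun _ h' => h'.map_of_rowsCommute (ρ.rowsCommute_rowKL_S k l) h.isCuntzRow_S i) hx) _ ?_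
  exact wordOp_mem (fun j _ hx => map_mem_acClosure_of
    (fun _ h' => h'.map_of_rowsCommute (ρ.rowsCommute_rowKL_T k l) h.isCuntzRow_T j) hx) _ hx

theorem CuntzType.inner_grade (h : ρ.CuntzType) {a b : ℕ} {X : H →L[ℂ] H}
    (hX : X ∈ ρ.grade a b) (x y : H) : ⟪X x, X y⟫ = ⟪x, y⟫ := by
  obtain ⟨r, rfl⟩ := hX
  exact (h.isCuntzRow_rowKL a b).iso.inner_map_map r x y

theorem CuntzType.sum_star_mul_rowKL (h : ρ.CuntzType) (X : H →L[ℂ] H) (a b : ℕ) (y : H) :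
    star X y = ∑ r, ρ.rowKL a b r (star (X * ρ.rowKL a b r) y) := by
  conv_lhs => rw [← (h.isCuntzRow_rowKL a b).sum_star (star X y)]
  simp only [star_mul]
  rfl

theorem nontrivial_rowKL_index (hm : 0 < m) (hn : 0 < n) (hmn : 2 ≤ m ∨ 2 ≤ n) {k l : ℕ}
    (hk : 0 < k) (hl : 0 < l) : Nontrivial ((Fin k → Fin m) × (Fin l → Fin n)) := by
  have := Fin.pos_iff_nonempty.1 hm
  have := Fin.pos_iff_nonempty.1 hn
  have := Fin.pos_iff_nonempty.1 hk
  have := Fin.pos_iff_nonempty.1 hl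
  rcases hmn with h | h
  · have := Fin.nontrivial_iff_two_le.2 h
    infer_instance
  · have := Fin.nontrivial_iff_two_le.2 h
    infer_instance

/-- The reducing core of `acClosure (rowKL k l)` for `rowKL p q` is contained in its reducing core
for `rowKL k l`. -/
theorem CuntzType.reducingCore_acClosure_le (h : ρ.CuntzType) (k l : ℕ) {p q : ℕ} (hp : 0 < p)
    (hq : 0 < q) : reducingCore (ρ.rowKL p q) (acClosure (ρ.rowKL k l)) ≤
      reducingCore (ρ.rowKL k l) (acClosure (ρ.rowKL k l)) := by
  intro y hy w
  obtain ⟨c, d, r, hc, hd⟩ := exists_complement hp hq (w.length * k) (w.length * l)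
  rw [h.sum_star_mul_rowKL _ c d]
  refine Submodule.sum_mem _ fun s _ => h.grade_map_mem_acClosure k l (Set.mem_range_self s) ?_
  have hmem := mul_mem_grade (wordOp_rowKL_mem_grade (ρ := ρ) k l w) (Set.mem_range_self s)
  rw [hc, hd] at hmem
  obtain ⟨w', hw'⟩ := exists_wordOp_rowKL_of_mem_grade hmem
  rw [← hw']
  exact hy w'

end TwoGraphRep

section InvariantCore

variable {E ι : Type*} [NormedAddCommGroup E] [InnerProductSpace ℂ E]

/-- The largest subspace of `L` invariant under every `V i`. -/
def invariantCore (V : ι → E →L[ℂ] E) (L : Submodule ℂ E) : Submodule ℂ E where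
  carrier := {y | ∀ w, wordOp V w y ∈ L}
  zero_mem' w := by simp
  add_mem' h h' w := by rw [map_add]; exact L.add_mem (h w) (h' w)
  smul_mem' c _ h w := by rw [map_smul]; exact L.smul_mem c (h w)

variable {V : ι → E →L[ℂ] E} {L : Submodule ℂ E}

theorem invariantCore_le : invariantCore V L ≤ L := fun y hy => by simpa using hy []

theorem map_mem_invariantCore (i : ι) : ∀ x ∈ invariantCore V L, V i x ∈ invariantCore V L :=
  fun x hx w => by
    have := hx (w ++ [i])
    rwa [wordOp_append_apply, wordOp_cons_apply, wordOp_nil] at this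

theorem isClosed_invariantCore (hL : IsClosed (L : Set E)) :
    IsClosed (invariantCore V L : Set E) := by
  have : (invariantCore V L : Set E) = ⋂ w, ⇑(wordOp V w) ⁻¹' (L : Set E) := by
    ext y; simp [invariantCore]
  rw [this]
  exact isClosed_iInter fun w => hL.preimage (wordOp V w).continuous

end InvariantCore

theorem IsDilationType.core_acClosure_eq_bot {E ι : Type*} [NormedAddCommGroup E]
    [InnerProductSpace ℂ E] [CompleteSpace E] [Fintype ι] [Nontrivial ι] {V : ι → E →L[ℂ] E}
    (hV : IsCuntzRow V) (hdil : IsDilationType V) : reducingCore V (acClosure V) = ⊥ := by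
  by_contra hne
  exact hdil.2 ⟨_, hne, isClosed_reducingCore isClosed_acClosure,
    fun i _ => map_mem_reducingCore hV.iso map_mem_acClosure i,
    fun i _ => star_mem_reducingCore i, Or.inl (hV.core_eq_closure_span_wandering hne).1⟩

theorem IsDilationType.eq_zero_of_ac_free {E ι : Type*} [NormedAddCommGroup E]
    [InnerProductSpace ℂ E] [CompleteSpace E] [Fintype ι] {V : ι → E →L[ℂ] E}
    (hV : IsCuntzRow V) (hdil : IsDilationType V) {N : Submodule ℂ E}
    (hN : IsClosed (N : Set E)) (hmap : ∀ i, ∀ x ∈ N, V i x ∈ N)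
    (hstar : ∀ i, ∀ x ∈ N, star (V i) x ∈ N) (hac : N ≤ (acClosure V)ᗮ) : N = ⊥ := by
  by_contra hne
  have : CompleteSpace N := hN.completeSpace_coe
  refine hdil.2 ⟨N, hne, hN, hmap, hstar, Or.inr ?_⟩
  refine isSelfAdjointRow_rowRestrict_iff.1 ((hV.iso.restrict hmap).isSelfAdjointRow fun x hx => ?_)
  have h := (Submodule.mem_orthogonal _ _).1 (hac x.2) x (hx.of_rowRestrict hmap).mem_acClosure
  exact Subtype.ext (inner_self_eq_zero.1 h)

/-- A reducing subspace of a Cuntz row-isometry with self-adjoint algebra is orthogonal to the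
wandering vectors. -/
theorem IsCuntzRow.wandering_orthogonal {E ι : Type*} [NormedAddCommGroup E]
    [InnerProductSpace ℂ E] [CompleteSpace E] [Fintype ι] [Nontrivial ι] {V : ι → E →L[ℂ] E}
    (hV : IsCuntzRow V) {M : Submodule ℂ E} (hM : IsClosed (M : Set E))
    (hmap : ∀ i, ∀ x ∈ M, V i x ∈ M) (hstar : ∀ i, ∀ x ∈ M, star (V i) x ∈ M)
    (hsa : restrictedAlgSelfAdjoint V M) {ζ : E} (hζ : IsWandering V ζ) : ζ ∈ Mᗮ := by
  have : CompleteSpace M := hM.completeSpace_coe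
  rw [← Submodule.orthogonalProjectionOnto_eq_zero_iff]
  by_contra hne
  obtain ⟨ξ, hξ⟩ := (hV.restrict hmap hstar).exists_isWandering
    (hζ.isAC.orthogonalProjectionOnto hmap hstar) hne
  exact (isSelfAdjointRow_rowRestrict_iff.2 hsa).not_isWandering (hV.restrict hmap hstar).iso ξ hξ

/-- If some `[S_u T_v : |u|=k, |v|=l]` (k,l>0) is of dilation type, then no
`[S_u T_v : |u|=p, |v|=q]` (p,q>0) has a singular direct summand. -/
theorem statement10 {m n : ℕ} (hm : 0 < m) (hn : 0 < n) (hmn : 2 ≤ m ∨ 2 ≤ n)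
    {θ : Equiv.Perm (Fin m × Fin n)} {H : Type*}
    [NormedAddCommGroup H] [InnerProductSpace ℂ H] [CompleteSpace H]
    (ρ : TwoGraphRep m n θ H) (hCuntz : ρ.CuntzType)
    (k l : ℕ) (hk : 0 < k) (hl : 0 < l)
    (hdil : IsDilationType (ρ.rowKL k l))
    (p q : ℕ) (hp : 0 < p) (hq : 0 < q) :
    ¬ ∃ M : Submodule ℂ H, M ≠ ⊥ ∧ IsClosed (M : Set H) ∧
        (∀ a, ∀ x ∈ M, ρ.rowKL p q a x ∈ M) ∧
        (∀ a, ∀ x ∈ M, star (ρ.rowKL p q a) x ∈ M) ∧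
        restrictedAlgSelfAdjoint (ρ.rowKL p q) M := by
  rintro ⟨M, hM0, hMc, hMmap, hMstar, hsa⟩
  have := TwoGraphRep.nontrivial_rowKL_index hm hn hmn hk hl
  have := TwoGraphRep.nontrivial_rowKL_index hm hn hmn hp hq
  have hA := hCuntz.isCuntzRow_rowKL k l
  have hB := hCuntz.isCuntzRow_rowKL p q
  set L := acClosure (ρ.rowKL k l) with hL
  have hLB : L = _ := hB.eq_closure_span_wandering isClosed_acClosure
    (fun r _ => hCuntz.grade_map_mem_acClosure k l (Set.mem_range_self r))
    (le_bot_iff.1 ((hCuntz.reducingCore_acClosure_le k l hp hq).trans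
      (hdil.core_acClosure_eq_bot hA).le))
  have hLM : L ≤ Mᗮ := by
    rw [hLB]
    exact Submodule.topologicalClosure_minimal _ (Submodule.span_le.2 fun ζ hζ =>
      hB.wandering_orthogonal hMc hMmap hMstar hsa hζ.2) (Submodule.isClosed_orthogonal _)
  have hMgrade : ∀ a b, ∀ X ∈ ρ.grade a b, ∀ x ∈ M, X x ∈ Lᗮ := by
    intro a b X hX x hx
    refine (Submodule.mem_orthogonal _ _).2 fun v hv => ?_
    obtain ⟨c, d, r, hc, hd⟩ := TwoGraphRep.exists_complement hp hq a b
    obtain ⟨Y, hY⟩ := TwoGraphRep.grade_nonempty (ρ := ρ) hm hn c d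
    have hmem := TwoGraphRep.mul_mem_grade hY hX
    rw [add_comm c, add_comm d, hc, hd] at hmem
    obtain ⟨w, hw⟩ := TwoGraphRep.exists_wordOp_rowKL_of_mem_grade hmem
    have hYX : Y (X x) ∈ M := by
      have := wordOp_mem hMmap w hx
      rwa [hw] at this
    rw [← hCuntz.inner_grade hY]
    exact (Submodule.mem_orthogonal' _ _).1 (hLM (hCuntz.grade_map_mem_acClosure k l hY hv)) _ hYX
  have hN := hdil.eq_zero_of_ac_free hA
    (N := reducingCore (ρ.rowKL k l) (invariantCore (ρ.rowKL k l) Lᗮ))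
    (isClosed_reducingCore (isClosed_invariantCore (Submodule.isClosed_orthogonal _)))
    (fun i _ => map_mem_reducingCore hA.iso map_mem_invariantCore i)
    (fun i _ => star_mem_reducingCore i) (reducingCore_le.trans invariantCore_le)
  suffices h : M ≤ reducingCore (ρ.rowKL k l) (invariantCore (ρ.rowKL k l) Lᗮ) from
    hM0 (le_bot_iff.1 (h.trans hN.le))
  intro x hx w' w
  obtain ⟨c, d, r, hc, hd⟩ := TwoGraphRep.exists_complement hp hq (w'.length * k) (w'.length * l)
  rw [hCuntz.sum_star_mul_rowKL _ c d, map_sum]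
  refine Submodule.sum_mem _ fun s _ => ?_
  have hmem := TwoGraphRep.mul_mem_grade (TwoGraphRep.wordOp_rowKL_mem_grade (ρ := ρ) k l w')
    (Set.mem_range_self s)
  rw [hc, hd] at hmem
  obtain ⟨u, hu⟩ := TwoGraphRep.exists_wordOp_rowKL_of_mem_grade hmem
  rw [← hu, ← mul_apply_eq_comp]
  exact hMgrade _ _ _ (TwoGraphRep.mul_mem_grade (TwoGraphRep.wordOp_rowKL_mem_grade k l w)
    (Set.mem_range_self s)) _ (star_wordOp_mem hMstar u hx)
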